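/- arXiv:1712.06268 — 8 statements merged into one kernel-verified Lean document; each statement's English description precedes it below -/
import Mathlib

section
/- Let y₀ ∈ ℝⁿ, t > 0, P ∈ ℝⁿ and x = y₀ + tP. If either (a) Dg(y₀) ≠ 0 and P ≠ Dg(y₀)/|Dg(y₀)|, or (b) Dg(y₀) = 0 and |P| > 1, then y₀ is not a minimizer for (x,t); that is, y₀ ∉ L(x,t). (In other words, points on any ray from y₀ other than the characteristic direction never have y₀ as a minimizer.) -/
open scoped InnerProductSpace Topology ENNReal
open Filter

noncomputable section

/-- Euclidean space `ℝⁿ`. -/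
abbrev Euc (n : ℕ) := EuclideanSpace ℝ (Fin n)

/-- Hopf–Lax solution of the Eikonal equation `uₜ + |∇u| = 0` with initial data `g`:
`u(x,t) = min {g(y) : |y - x| ≤ t}`. -/
def HLu {n : ℕ} (g : Euc n → ℝ) (x : Euc n) (t : ℝ) : ℝ :=
  sInf (g '' Metric.closedBall x t)

/-- The set of minimizers `L(x,t) = {y : |y - x| ≤ t ∧ g y = u(x,t)}`. -/
def HLL {n : ℕ} (g : Euc n → ℝ) (x : Euc n) (t : ℝ) : Set (Euc n) :=
  {y | ‖y - x‖ ≤ t ∧ g y = HLu g x t}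

theorem noncharacteristic_ray_not_minimizer {n : ℕ} (hn : 0 < n) (g : Euc n → ℝ) (Dg : Euc n → Euc n)
    (hg : ∀ y, HasGradientAt g (Dg y) y) (hDg : Continuous Dg)
    (y₀ P : Euc n) (t : ℝ) (ht : 0 < t)
    (h : (Dg y₀ ≠ 0 ∧ P ≠ ‖Dg y₀‖⁻¹ • Dg y₀) ∨ (Dg y₀ = 0 ∧ 1 < ‖P‖)) :
    y₀ ∉ HLL g (y₀ + t • P) t := by
  rintro ⟨h1, h2⟩
  have hP : ‖P‖ ≤ 1 := by
    have e : y₀ - (y₀ + t • P) = -(t • P) := by abel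
    rw [e, norm_neg, norm_smul, Real.norm_of_nonneg ht.le] at h1
    by_contra hc
    push Not at hc
    nlinarith
  rcases h with ⟨hD, hne⟩ | ⟨_, hlt⟩
  swap
  · linarith
  set x := y₀ + t • P with hx
  set D := Dg y₀ with hDdef
  have hgc : Continuous g :=
    continuous_iff_continuousAt.2 fun y => (hg y).hasFDerivAt.continuousAt
  have hbdd : BddBelow (g '' Metric.closedBall x t) :=
    ((isCompact_closedBall x t).image hgc).bddBelow
  have hmin : IsMinOn g (Metric.closedBall x t) y₀ := by
    intro z hz
    show g y₀ ≤ g z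
    rw [h2]
    exact csInf_le hbdd ⟨z, hz, rfl⟩
  have hDn : 0 < ‖D‖ := norm_pos_iff.2 hD
  set e := ‖D‖⁻¹ • D with he
  have hen : ‖e‖ = 1 := by
    rw [he, norm_smul, norm_inv, norm_norm, inv_mul_cancel₀ hDn.ne']
  have hDe : D = ‖D‖ • e := by
    rw [he, smul_smul, mul_inv_cancel₀ hDn.ne', one_smul]
  have hy : y₀ ∈ Metric.closedBall x t := by
    rw [mem_closedBall_iff_norm]; exact h1
  have hz : x - t • e ∈ Metric.closedBall x t := by
    rw [mem_closedBall_iff_norm]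
    simp [norm_smul, hen, abs_of_pos ht]
  have hseg : segment ℝ y₀ (x - t • e) ⊆ Metric.closedBall x t :=
    (convex_closedBall x t).segment_subset hy hz
  have key := hmin.localize.hasFDerivWithinAt_nonneg
    (hg y₀).hasFDerivAt.hasFDerivWithinAt (sub_mem_posTangentConeAt_of_segment_subset hseg)
  have e1 : x - t • e - y₀ = t • (P - e) := by rw [hx, smul_sub]; abel
  rw [e1, InnerProductSpace.toDual_apply_apply, ← hDdef, inner_smul_right, hDe,
    real_inner_smul_left, inner_sub_right, real_inner_self_eq_norm_sq, hen] at key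
  have k2 : 1 ≤ ⟪e, P⟫_ℝ := by
    have := nonneg_of_mul_nonneg_right key ht
    have := nonneg_of_mul_nonneg_right this hDn
    linarith
  apply hne
  have k3 := norm_sub_sq_real P e
  rw [hen, real_inner_comm] at k3
  have k4 : ‖P - e‖ ^ 2 ≤ 0 := by nlinarith [norm_nonneg P]
  have k5 : ‖P - e‖ = 0 := by nlinarith [norm_nonneg (P - e), sq_nonneg ‖P - e‖, pow_eq_zero_iff (two_ne_zero) |>.1 (le_antisymm k4 (sq_nonneg _))]
  exact sub_eq_zero.1 (norm_eq_zero.1 k5)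
end
end

section
/- Let x₀ ∈ ℝⁿ and t₀ > 0. If L(x₀,t₀) = {y₀} is a singleton, then u is (Fréchet) differentiable at (x₀,t₀) as a function on ℝⁿ × (0,∞), and its derivative is Du(x₀,t₀) = (∇u, u_t)(x₀,t₀) = (Dg(y₀), −|Dg(y₀)|). -/
open scoped InnerProductSpace Topology ENNReal
open Filter

noncomputable section

/-- The continuous linear map `(v,s) ↦ ⟪w, v⟫ + a • s` on `ℝⁿ × ℝ`, representing the
total derivative with spatial gradient `w` and time derivative `a`. -/
def gradCLM {n : ℕ} (w : Euc n) (a : ℝ) : (Euc n × ℝ) →L[ℝ] ℝ :=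
  (innerSL ℝ w).comp (ContinuousLinearMap.fst ℝ (Euc n) ℝ) +
    a • ContinuousLinearMap.snd ℝ (Euc n) ℝ

set_option maxHeartbeats 2000000

theorem HLu_le_aux {n : ℕ} {g : Euc n → ℝ} (hc : Continuous g) {x y : Euc n} {t : ℝ}
    (h : ‖y - x‖ ≤ t) : HLu g x t ≤ g y := by
  unfold HLu
  refine csInf_le ((isCompact_closedBall x t).image hc).bddBelow ⟨y, ?_, rfl⟩
  rwa [Metric.mem_closedBall, dist_eq_norm]

theorem HLu_exists_aux {n : ℕ} {g : Euc n → ℝ} (hc : Continuous g) (x : Euc n) (t : ℝ)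
    (ht : 0 < t) : ∃ y, ‖y - x‖ ≤ t ∧ g y = HLu g x t := by
  have hne : (g '' Metric.closedBall x t).Nonempty :=
    (Metric.nonempty_closedBall.2 ht.le).image g
  obtain ⟨y, hy, h⟩ := ((isCompact_closedBall x t).image hc).sInf_mem hne
  refine ⟨y, ?_, h⟩
  rwa [Metric.mem_closedBall, dist_eq_norm] at hy

theorem inner_aux {n : ℕ} {g : Euc n → ℝ} {P : Euc n} {x₀ y₀ : Euc n} {t₀ : ℝ}
    (ht₀ : 0 < t₀) (hg : HasGradientAt g P y₀) (hy : ‖y₀ - x₀‖ ≤ t₀)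
    (hmin : ∀ y, ‖y - x₀‖ ≤ t₀ → g y₀ ≤ g y) :
    ⟪P, y₀ - x₀⟫_ℝ = - ‖P‖ * t₀ := by
  have hcs := abs_le.1 (abs_real_inner_le_norm P (y₀ - x₀))
  have h1 : ‖P‖ * ‖y₀ - x₀‖ ≤ ‖P‖ * t₀ := by gcongr
  by_cases hP : P = 0
  · simp [hP]
  have hPn : 0 < ‖P‖ := norm_pos_iff.2 hP
  have key : 0 ≤ ⟪P, (x₀ - (t₀ / ‖P‖) • P) - y₀⟫_ℝ := by
    have hloc : IsLocalMinOn g (Metric.closedBall x₀ t₀) y₀ := by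
      refine IsMinOn.localize ?_
      intro y hy
      exact hmin y (by rwa [Metric.mem_closedBall, dist_eq_norm] at hy)
    have hz : (x₀ - (t₀ / ‖P‖) • P) ∈ Metric.closedBall x₀ t₀ := by
      rw [Metric.mem_closedBall, dist_eq_norm]
      have : x₀ - (t₀ / ‖P‖) • P - x₀ = -((t₀ / ‖P‖) • P) := by abel
      rw [this, norm_neg, norm_smul, Real.norm_of_nonneg (by positivity)]
      field_simp
      exact le_rfl
    have hy' : y₀ ∈ Metric.closedBall x₀ t₀ := by
      rwa [Metric.mem_closedBall, dist_eq_norm]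
    have := hloc.hasFDerivWithinAt_nonneg hg.hasFDerivAt.hasFDerivWithinAt
      (sub_mem_posTangentConeAt_of_segment_subset
        ((convex_closedBall x₀ t₀).segment_subset hy' hz))
    simpa using this
  have e : ⟪P, (x₀ - (t₀ / ‖P‖) • P) - y₀⟫_ℝ = - ⟪P, y₀ - x₀⟫_ℝ - t₀ * ‖P‖ := by
    have : (x₀ - (t₀ / ‖P‖) • P) - y₀ = -(y₀ - x₀) - (t₀ / ‖P‖) • P := by abel
    rw [this, inner_sub_right, inner_neg_right, inner_smul_right, real_inner_self_eq_norm_sq]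
    field_simp
  rw [e] at key
  linarith [hcs.1]

theorem differentiable_of_unique_minimizer {n : ℕ} (hn : 0 < n) (g : Euc n → ℝ) (Dg : Euc n → Euc n)
    (hg : ∀ y, HasGradientAt g (Dg y) y) (hDg : Continuous Dg)
    (x₀ y₀ : Euc n) (t₀ : ℝ) (ht₀ : 0 < t₀) (hL : HLL g x₀ t₀ = {y₀}) :
    HasFDerivAt (fun p : Euc n × ℝ => HLu g p.1 p.2)
      (gradCLM (Dg y₀) (-‖Dg y₀‖)) (x₀, t₀) := by
  have hc : Continuous g := continuous_iff_continuousAt.2 fun y => (hg y).continuousAt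
  have hy₀ : y₀ ∈ HLL g x₀ t₀ := by rw [hL]; rfl
  obtain ⟨hy₀n, hy₀u⟩ := hy₀
  have hmin : ∀ y, ‖y - x₀‖ ≤ t₀ → g y₀ ≤ g y := fun y hy => by
    rw [hy₀u]; exact HLu_le_aux hc hy
  have hin := inner_aux ht₀ (hg y₀) hy₀n hmin
  set P := Dg y₀ with hPdef
  have hstrict : HasStrictFDerivAt g (InnerProductSpace.toDual ℝ (Euc n) P) y₀ := by
    refine hasStrictFDerivAt_of_hasFDerivAt_of_continuousAt
      (f' := fun y => InnerProductSpace.toDual ℝ (Euc n) (Dg y))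
      (Eventually.of_forall fun y => (hg y).hasFDerivAt) ?_
    exact ((InnerProductSpace.toDual ℝ (Euc n)).continuous.comp hDg).continuousAt
  have hex : ∀ p : Euc n × ℝ, ∃ y, 0 < p.2 → (‖y - p.1‖ ≤ p.2 ∧ g y = HLu g p.1 p.2) := by
    intro p
    by_cases hp : 0 < p.2
    · obtain ⟨y, hy⟩ := HLu_exists_aux hc p.1 p.2 hp
      exact ⟨y, fun _ => hy⟩
    · exact ⟨0, fun h => absurd h hp⟩
  choose Y hY using hex
  have hpos : ∀ᶠ p : Euc n × ℝ in 𝓝 (x₀, t₀), 0 < p.2 :=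
    (continuous_snd.tendsto (x₀, t₀)).eventually (lt_mem_nhds ht₀)
  -- the competitor for the upper bound
  let Z : Euc n × ℝ → Euc n := fun p => p.1 + (p.2 / t₀) • (y₀ - x₀)
  have hZc : Continuous Z := by fun_prop
  have hZ0 : Z (x₀, t₀) = y₀ := by simp [Z, div_self ht₀.ne']
  have hZt : Tendsto Z (𝓝 (x₀, t₀)) (𝓝 y₀) := by
    have := hZc.tendsto (x₀, t₀); rwa [hZ0] at this
  have hZn : ∀ p : Euc n × ℝ, 0 < p.2 → ‖Z p - p.1‖ ≤ p.2 := by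
    intro p hp
    have : Z p - p.1 = (p.2 / t₀) • (y₀ - x₀) := by simp [Z]
    rw [this, norm_smul, Real.norm_of_nonneg (by positivity)]
    calc p.2 / t₀ * ‖y₀ - x₀‖ ≤ p.2 / t₀ * t₀ := by gcongr
      _ = p.2 := by field_simp
  have hYt : Tendsto Y (𝓝 (x₀, t₀)) (𝓝 y₀) := by
    refine (isCompact_closedBall x₀ (t₀ + 2)).tendsto_nhds_of_unique_mapClusterPt ?_ ?_
    · filter_upwards [hpos, Metric.ball_mem_nhds (x₀, t₀) one_pos] with p hp hb
      rw [Metric.mem_ball, Prod.dist_eq, max_lt_iff] at hb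
      have h1 := (hY p hp).1
      rw [← dist_eq_norm] at h1
      have h2 := abs_lt.1 (by simpa [Real.dist_eq] using hb.2 : |p.2 - t₀| < 1)
      rw [Metric.mem_closedBall]
      have h3 := hb.1
      have := dist_triangle (Y p) p.1 x₀
      simp only at h3
      linarith [h2.2]
    · intro y _ hcl
      obtain ⟨U, hU, hUt⟩ := mapClusterPt_iff_ultrafilter.1 hcl
      have hid : Tendsto (fun p : Euc n × ℝ => p) U (𝓝 (x₀, t₀)) := hU
      have hfst : Tendsto (fun p : Euc n × ℝ => p.1) U (𝓝 x₀) :=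
        (continuous_fst.tendsto (x₀, t₀)).comp hid
      have hsnd : Tendsto (fun p : Euc n × ℝ => p.2) U (𝓝 t₀) :=
        (continuous_snd.tendsto (x₀, t₀)).comp hid
      have a1 : ‖y - x₀‖ ≤ t₀ := by
        refine le_of_tendsto_of_tendsto (hUt.sub hfst).norm hsnd ?_
        filter_upwards [hU hpos] with p hp using (hY p hp).1
      have a2 : g y ≤ g y₀ := by
        refine le_of_tendsto_of_tendsto ((hc.tendsto y).comp hUt)
          ((hc.tendsto y₀).comp (hZt.comp hid)) ?_
        filter_upwards [hU hpos] with p hp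
        simp only [Function.comp]
        rw [(hY p hp).2]
        exact HLu_le_aux hc (hZn p hp)
      have : y ∈ HLL g x₀ t₀ := ⟨a1, by rw [← hy₀u]; exact le_antisymm a2 (hmin y a1)⟩
      rwa [hL] at this
  have hfst : Tendsto (fun p : Euc n × ℝ => p.1) (𝓝 (x₀, t₀)) (𝓝 x₀) :=
    continuous_fst.tendsto (x₀, t₀)
  have hsnd : Tendsto (fun p : Euc n × ℝ => p.2) (𝓝 (x₀, t₀)) (𝓝 t₀) :=
    continuous_snd.tendsto (x₀, t₀)
  -- the competitor for the lower bound
  let V : Euc n × ℝ → Euc n := fun p => p.2⁻¹ • (Y p - p.1)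
  have hVt : Tendsto V (𝓝 (x₀, t₀)) (𝓝 (t₀⁻¹ • (y₀ - x₀))) :=
    (hsnd.inv₀ ht₀.ne').smul (hYt.sub hfst)
  let W : Euc n × ℝ → Euc n := fun p => x₀ + t₀ • V p
  have hWt : Tendsto W (𝓝 (x₀, t₀)) (𝓝 y₀) := by
    have := (hVt.const_smul t₀).const_add x₀
    rwa [smul_inv_smul₀ ht₀.ne', add_sub_cancel] at this
  have hVn : ∀ p : Euc n × ℝ, 0 < p.2 → ‖V p‖ ≤ 1 := by
    intro p hp
    simp only [V]
    rw [norm_smul, Real.norm_of_nonneg (by positivity)]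
    calc p.2⁻¹ * ‖Y p - p.1‖ ≤ p.2⁻¹ * p.2 := by gcongr; exact (hY p hp).1
      _ = 1 := by field_simp
  have hinV : Tendsto (fun p => ⟪P, V p⟫_ℝ) (𝓝 (x₀, t₀)) (𝓝 (-‖P‖)) := by
    have h := (tendsto_const_nhds (x := P)).inner (𝕜 := ℝ) hVt
    have e : ⟪P, t₀⁻¹ • (y₀ - x₀)⟫_ℝ = -‖P‖ := by
      rw [inner_smul_right, hin]; field_simp
    rwa [e] at h
  rw [hasFDerivAt_iff_isLittleO, Asymptotics.isLittleO_iff]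
  intro c hcpos
  have hst := Asymptotics.isLittleO_iff.1 hstrict.isLittleO (show 0 < c / 4 by positivity)
  have E1 := (hZt.prodMk_nhds (tendsto_const_nhds (x := y₀))).eventually hst
  have E2 := (hYt.prodMk_nhds hWt).eventually hst
  have E3 := hinV.eventually (Metric.ball_mem_nhds _ (show 0 < c / 4 by positivity))
  filter_upwards [hpos, E1, E2, E3] with p hp e1 e2 e3
  have hd1 : ‖p.1 - x₀‖ ≤ ‖p - (x₀, t₀)‖ := norm_fst_le (p - (x₀, t₀))
  have hd2 : |p.2 - t₀| ≤ ‖p - (x₀, t₀)‖ := norm_snd_le (p - (x₀, t₀))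
  set d := ‖p - (x₀, t₀)‖ with hd
  have hd0 : 0 ≤ d := norm_nonneg _
  have hgr : (gradCLM P (-‖P‖)) (p - (x₀, t₀)) = ⟪P, p.1 - x₀⟫_ℝ - ‖P‖ * (p.2 - t₀) := by
    simp [gradCLM]; ring
  have z1 : Z p - y₀ = (p.1 - x₀) + ((p.2 - t₀) * t₀⁻¹) • (y₀ - x₀) := by
    have : (p.2 - t₀) * t₀⁻¹ = p.2 / t₀ - 1 := by field_simp
    rw [this, sub_smul, one_smul]; simp only [Z]; abel
  have w1 : Y p - W p = (p.1 - x₀) + (p.2 - t₀) • V p := by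
    have : Y p = p.1 + p.2 • V p := by
      simp only [V]; rw [smul_inv_smul₀ hp.ne']; abel
    simp only [W]; rw [sub_smul]; nth_rewrite 1 [this]; abel
  have z2 : ‖Z p - y₀‖ ≤ 2 * d := by
    rw [z1]
    refine (norm_add_le _ _).trans ?_
    rw [norm_smul, norm_mul, Real.norm_eq_abs, Real.norm_of_nonneg (inv_nonneg.2 ht₀.le)]
    have : |p.2 - t₀| * t₀⁻¹ * ‖y₀ - x₀‖ ≤ |p.2 - t₀| * t₀⁻¹ * t₀ := by gcongr
    have e : |p.2 - t₀| * t₀⁻¹ * t₀ = |p.2 - t₀| := by field_simp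
    linarith
  have w2 : ‖Y p - W p‖ ≤ 2 * d := by
    rw [w1]
    refine (norm_add_le _ _).trans ?_
    rw [norm_smul, Real.norm_eq_abs]
    have : |p.2 - t₀| * ‖V p‖ ≤ |p.2 - t₀| * 1 := by gcongr; exact hVn p hp
    linarith
  have z3 : ⟪P, Z p - y₀⟫_ℝ = ⟪P, p.1 - x₀⟫_ℝ - ‖P‖ * (p.2 - t₀) := by
    rw [z1, inner_add_right, inner_smul_right, hin]; field_simp; ring
  have w3 : ⟪P, Y p - W p⟫_ℝ = ⟪P, p.1 - x₀⟫_ℝ + (p.2 - t₀) * ⟪P, V p⟫_ℝ := by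
    rw [w1, inner_add_right, inner_smul_right]
  have w4 : |(p.2 - t₀) * (⟪P, V p⟫_ℝ + ‖P‖)| ≤ d * (c / 4) := by
    rw [abs_mul]
    have : |⟪P, V p⟫_ℝ + ‖P‖| ≤ c / 4 := by
      have h := le_of_lt (Metric.mem_ball.1 e3)
      rwa [Real.dist_eq, sub_neg_eq_add] at h
    gcongr
  have hWn : ‖W p - x₀‖ ≤ t₀ := by
    have : W p - x₀ = t₀ • V p := by simp [W]
    rw [this, norm_smul, Real.norm_of_nonneg ht₀.le]
    have := hVn p hp
    nlinarith
  have up : HLu g p.1 p.2 ≤ g (Z p) := HLu_le_aux hc (hZn p hp)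
  have lo := hmin _ hWn
  have hYu := (hY p hp).2
  simp only [InnerProductSpace.toDual_apply_apply] at e1 e2
  rw [z3, Real.norm_eq_abs] at e1
  rw [w3, Real.norm_eq_abs] at e2
  have f1 : c / 4 * ‖Z p - y₀‖ ≤ c / 4 * (2 * d) := by gcongr
  have f2 : c / 4 * ‖Y p - W p‖ ≤ c / 4 * (2 * d) := by gcongr
  have g1 := abs_le.1 (e1.trans f1)
  have g2 := abs_le.1 (e2.trans f2)
  have g3 := abs_le.1 w4
  have hcd : 0 ≤ c * d := by positivity
  rw [hgr, Real.norm_eq_abs]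
  rw [← hy₀u, abs_le]
  constructor <;> nlinarith [g1.1, g1.2, g2.1, g2.2, g3.1, g3.2]
end
end

section
/- Let x₀ ∈ ℝⁿ and t₀ > 0. If L(x₀,t₀) contains at least two distinct points and there exists y₁ ∈ L(x₀,t₀) with Dg(y₁) ≠ 0, then u is not (Fréchet) differentiable at (x₀,t₀). -/
open scoped InnerProductSpace Topology ENNReal
open Filter

noncomputable section

theorem HLu_le {n : ℕ} (g : Euc n → ℝ) (hc : Continuous g) (x y : Euc n) (t : ℝ)
    (h : ‖y - x‖ ≤ t) : HLu g x t ≤ g y := by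
  apply csInf_le
  · exact ((isCompact_closedBall x t).image hc).bddBelow
  · exact ⟨y, by simpa [dist_eq_norm] using h, rfl⟩

theorem HL_grad_eq {n : ℕ} (g : Euc n → ℝ) (Dg : Euc n → Euc n)
    (hg : ∀ y, HasGradientAt g (Dg y) y) (hc : Continuous g)
    (x₀ : Euc n) (t₀ : ℝ) (L : Euc n →L[ℝ] ℝ)
    (hL : HasFDerivAt (fun x => HLu g x t₀) L x₀)
    (y : Euc n) (hy : y ∈ HLL g x₀ t₀) : InnerProductSpace.toDual ℝ (Euc n) (Dg y) = L := by
  have h1 : HasFDerivAt (fun v : Euc n => g (y + v))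
      (InnerProductSpace.toDual ℝ (Euc n) (Dg y)) 0 := by
    have := (hg y).hasFDerivAt
    rw [← add_zero y] at this
    simpa using (hasFDerivAt_comp_add_left y).2 this
  have h2 : HasFDerivAt (fun v : Euc n => HLu g (x₀ + v) t₀) L 0 := by
    rw [← add_zero x₀] at hL
    exact (hasFDerivAt_comp_add_left (f := fun x => HLu g x t₀) x₀).2 hL
  have h3 : IsLocalMin (fun v : Euc n => g (y + v) - HLu g (x₀ + v) t₀) 0 := by
    refine Filter.Eventually.of_forall fun v => ?_
    have := HLu_le g hc (x₀ + v) (y + v) t₀ (by simpa using hy.1)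
    have h := hy.2
    simp only [add_zero]
    linarith
  exact sub_eq_zero.1 (h3.hasFDerivAt_eq_zero (h1.sub h2))

theorem HL_loc {n : ℕ} (g : Euc n → ℝ) (p : Euc n) (hc : Continuous g)
    (x₀ : Euc n) (t₀ : ℝ) (ht₀ : 0 < t₀) (hp : p ≠ 0)
    (y : Euc n) (hg : HasGradientAt g p y)
    (hy : y ∈ HLL g x₀ t₀) : x₀ - y = (t₀ / ‖p‖) • p := by
  have hp' : 0 < ‖p‖ := norm_pos_iff.2 hp
  have hmin : IsMinOn g (Metric.closedBall x₀ t₀) y := by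
    intro z hz
    have := HLu_le g hc x₀ z t₀ (by simpa [dist_eq_norm] using hz)
    have h := hy.2
    simp only [Set.mem_setOf_eq]
    linarith
  have hyb : y ∈ Metric.closedBall x₀ t₀ := by simpa [dist_eq_norm] using hy.1
  have hzb : x₀ - (t₀ / ‖p‖) • p ∈ Metric.closedBall x₀ t₀ := by
    simp [dist_eq_norm, norm_smul, hp'.ne', abs_of_pos ht₀]
  have hk := hmin.localize.hasFDerivWithinAt_nonneg hg.hasFDerivAt.hasFDerivWithinAt
    (sub_mem_posTangentConeAt_of_segment_subset
      ((convex_closedBall x₀ t₀).segment_subset hyb hzb))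
  have hn : ‖x₀ - y‖ ≤ t₀ := by rw [norm_sub_rev]; exact hy.1
  set w := x₀ - y with hw
  have e : x₀ - (t₀ / ‖p‖) • p - y = w - (t₀ / ‖p‖) • p := by rw [hw]; abel
  rw [e] at hk
  simp only [InnerProductSpace.toDual_apply_apply, inner_sub_right, inner_smul_right,
    real_inner_self_eq_norm_sq] at hk
  have hk2 : t₀ * ‖p‖ ≤ ⟪p, w⟫_ℝ := by
    have : t₀ / ‖p‖ * ‖p‖ ^ 2 = t₀ * ‖p‖ := by field_simp
    linarith
  have hk3 : t₀ * t₀ ≤ t₀ / ‖p‖ * ⟪p, w⟫_ℝ := by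
    calc t₀ * t₀ = t₀ / ‖p‖ * (t₀ * ‖p‖) := by field_simp
      _ ≤ _ := by gcongr
  have hs : ‖w - (t₀ / ‖p‖) • p‖ ^ 2 ≤ 0 := by
    rw [norm_sub_sq_real, inner_smul_right, real_inner_comm, norm_smul]
    have : ‖t₀ / ‖p‖‖ * ‖p‖ = t₀ := by
      rw [Real.norm_of_nonneg (by positivity)]; field_simp
    rw [this]
    nlinarith [norm_nonneg w]
  have : ‖w - (t₀ / ‖p‖) • p‖ = 0 := by
    have := sq_nonneg ‖w - (t₀ / ‖p‖) • p‖
    exact pow_eq_zero_iff (two_ne_zero) |>.1 (le_antisymm hs this)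
  exact sub_eq_zero.1 (norm_eq_zero.1 this)

theorem not_differentiable_of_two_minimizers {n : ℕ} (hn : 0 < n) (g : Euc n → ℝ) (Dg : Euc n → Euc n)
    (hg : ∀ y, HasGradientAt g (Dg y) y) (hDg : Continuous Dg)
    (x₀ : Euc n) (t₀ : ℝ) (ht₀ : 0 < t₀)
    (y₁ y₂ : Euc n) (hy₁ : y₁ ∈ HLL g x₀ t₀) (hy₂ : y₂ ∈ HLL g x₀ t₀) (hne : y₁ ≠ y₂)
    (hDg₁ : Dg y₁ ≠ 0) :
    ¬ DifferentiableAt ℝ (fun p : Euc n × ℝ => HLu g p.1 p.2) (x₀, t₀) := by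
  intro hd
  have hc : Continuous g := continuous_iff_continuousAt.2 fun y => (hg y).continuousAt
  have hd2 : DifferentiableAt ℝ (fun x : Euc n => HLu g x t₀) x₀ :=
    DifferentiableAt.comp (g := fun p : Euc n × ℝ => HLu g p.1 p.2)
      (f := fun x : Euc n => (x, t₀)) x₀ hd (by fun_prop)
  have e1 := HL_grad_eq g Dg hg hc x₀ t₀ _ hd2.hasFDerivAt y₁ hy₁
  have e2 := HL_grad_eq g Dg hg hc x₀ t₀ _ hd2.hasFDerivAt y₂ hy₂
  have e : Dg y₂ = Dg y₁ := (InnerProductSpace.toDual ℝ (Euc n)).injective (e2.trans e1.symm)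
  have a1 := HL_loc g (Dg y₁) hc x₀ t₀ ht₀ hDg₁ y₁ (hg y₁) hy₁
  have a2 := HL_loc g (Dg y₁) hc x₀ t₀ ht₀ hDg₁ y₂ (e ▸ hg y₂) hy₂
  exact hne (sub_right_injective (a1.trans a2.symm))
end
end

section
/- Let x₀ ∈ ℝⁿ and t₀ > 0. If Dg(y) = 0 for every y ∈ L(x₀,t₀), then u is (Fréchet) differentiable at (x₀,t₀) and Du(x₀,t₀) = 0 ∈ ℝⁿ⁺¹ (even if L(x₀,t₀) contains more than one point). -/
open scoped InnerProductSpace Topology ENNReal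
open Filter

noncomputable section

theorem aux_move {n : ℕ} (x x' y : Euc n) (t t' : ℝ) (ht : 0 < t) (ht' : 0 ≤ t')
    (hy : ‖y - x‖ ≤ t) : ∃ z, ‖z - x'‖ ≤ t' ∧ ‖z - y‖ ≤ ‖x' - x‖ + |t' - t| := by
  refine ⟨x' + (t' / t) • (y - x), ?_, ?_⟩
  · rw [add_sub_cancel_left, norm_smul, Real.norm_of_nonneg (by positivity)]
    calc t' / t * ‖y - x‖ ≤ t' / t * t := by gcongr
      _ = t' := by field_simp
  · have e : x' + (t' / t) • (y - x) - y = (x' - x) + ((t' - t) / t) • (y - x) := by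
      rw [sub_div, div_self ht.ne', sub_smul, one_smul]; abel
    rw [e]
    refine (norm_add_le _ _).trans ?_
    gcongr
    rw [norm_smul, Real.norm_eq_abs, abs_div, abs_of_pos ht]
    calc |t' - t| / t * ‖y - x‖ ≤ |t' - t| / t * t := by gcongr
      _ = |t' - t| := by field_simp

theorem aux_min {n : ℕ} (g : Euc n → ℝ) (hg : Continuous g) (x : Euc n) (t : ℝ) (ht : 0 ≤ t) :
    (∃ y, ‖y - x‖ ≤ t ∧ g y = HLu g x t) ∧ ∀ y, ‖y - x‖ ≤ t → HLu g x t ≤ g y := by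
  have hc : IsCompact (Metric.closedBall x t) := isCompact_closedBall x t
  have hci := hc.image hg
  constructor
  · have := hci.sInf_mem ((Metric.nonempty_closedBall.2 ht).image g)
    obtain ⟨y, hy, h⟩ := this
    exact ⟨y, by rwa [mem_closedBall_iff_norm] at hy, h⟩
  · intro y hy
    exact csInf_le hci.bddBelow ⟨y, by rwa [mem_closedBall_iff_norm], rfl⟩

theorem differentiable_of_all_gradients_zero {n : ℕ} (hn : 0 < n) (g : Euc n → ℝ) (Dg : Euc n → Euc n)
    (hg : ∀ y, HasGradientAt g (Dg y) y) (hDg : Continuous Dg)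
    (x₀ : Euc n) (t₀ : ℝ) (ht₀ : 0 < t₀)
    (h0 : ∀ y ∈ HLL g x₀ t₀, Dg y = 0) :
    HasFDerivAt (fun p : Euc n × ℝ => HLu g p.1 p.2)
      (0 : (Euc n × ℝ) →L[ℝ] ℝ) (x₀, t₀) := by
  have hgc : Continuous g := continuous_iff_continuousAt.2 fun y => (hg y).continuousAt
  obtain ⟨⟨y0, hy0, hgy0⟩, hle⟩ := aux_min g hgc x₀ t₀ ht₀.le
  set u0 := HLu g x₀ t₀ with hu0
  -- near a minimizer, g is Lipschitz with small constant
  have hlip : ∀ ε > 0, ∀ z ∈ HLL g x₀ t₀, ∃ r > 0, ∀ a ∈ Metric.ball z r, ∀ b ∈ Metric.ball z r,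
      |g a - g b| ≤ ε * ‖a - b‖ := by
    intro ε hε z hz
    have hz0 := h0 z hz
    have hev : ∀ᶠ y in 𝓝 z, ‖Dg y‖ < ε := by
      apply (hDg.norm.tendsto z).eventually_lt_const
      rw [hz0, norm_zero]; exact hε
    obtain ⟨r, hr, hb⟩ := Metric.eventually_nhds_iff_ball.1 hev
    refine ⟨r, hr, fun a ha b hb' => ?_⟩
    have := (convex_ball z r).norm_image_sub_le_of_norm_hasFDerivWithin_le
      (f := g) (C := ε) (fun y _ => (hg y).hasFDerivAt.hasFDerivWithinAt)
      (fun y hy => by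
        rw [LinearIsometryEquiv.norm_map]; exact (hb y hy).le) hb' ha
    simpa [Real.norm_eq_abs] using this
  have hlow : ∀ ε > 0, ∃ η > 0, ∀ z, ‖z - x₀‖ ≤ t₀ → ∀ y, ‖z - y‖ < η →
      u0 - ε * ‖z - y‖ ≤ g y := by
    intro ε hε
    have hloc : ∀ z : Metric.closedBall x₀ t₀, ∃ r > 0, ∀ a ∈ Metric.ball (z : Euc n) r,
        ∀ b ∈ Metric.ball (z : Euc n) r, ‖a - x₀‖ ≤ t₀ → u0 - ε * ‖a - b‖ ≤ g b := by
      rintro ⟨z, hz⟩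
      rw [mem_closedBall_iff_norm] at hz
      by_cases hzL : g z = u0
      · obtain ⟨r, hr, h⟩ := hlip ε hε z ⟨hz, hzL⟩
        refine ⟨r, hr, fun a ha b hb hax => ?_⟩
        have h1 := (abs_le.1 (h a ha b hb)).2
        have h2 := hle a hax
        linarith
      · have hlt : u0 < g z := lt_of_le_of_ne (hle z hz) (Ne.symm hzL)
        obtain ⟨r, hr, h⟩ := Metric.eventually_nhds_iff_ball.1
          ((hgc.tendsto z).eventually_const_lt hlt)
        refine ⟨r, hr, fun a ha b hb hax => ?_⟩
        have h1 := h b hb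
        have : 0 ≤ ε * ‖a - b‖ := by positivity
        linarith
    choose r hr hloc using hloc
    obtain ⟨η, hη, h⟩ := lebesgue_number_lemma_of_metric
      (isCompact_closedBall x₀ t₀) (c := fun i : Metric.closedBall x₀ t₀ => Metric.ball (i : Euc n) (r i))
      (fun i => Metric.isOpen_ball)
      (fun z hz => Set.mem_iUnion.2 ⟨⟨z, hz⟩, Metric.mem_ball_self (hr _)⟩)
    refine ⟨η, hη, fun z hz y hy => ?_⟩
    obtain ⟨i, hi⟩ := h z (by rwa [mem_closedBall_iff_norm])
    exact hloc i z (hi (Metric.mem_ball_self hη)) y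
      (hi (by rwa [Metric.mem_ball, dist_comm, dist_eq_norm])) hz
  rw [hasFDerivAt_iff_isLittleO, Asymptotics.isLittleO_iff]
  intro c hc
  obtain ⟨η, hη, hlow⟩ := hlow (c / 2) (by positivity)
  obtain ⟨r, hr, hup⟩ := hlip (c / 2) (by positivity) y0 ⟨hy0, hgy0⟩
  have hm : 0 < min (min (η / 2) (r / 2)) t₀ := by positivity
  filter_upwards [Metric.ball_mem_nhds (x₀, t₀) hm] with p hp
  rw [mem_ball_iff_norm] at hp
  obtain ⟨x, t⟩ := p
  have hx : ‖x - x₀‖ ≤ ‖(x, t) - (x₀, t₀)‖ := norm_fst_le ((x, t) - (x₀, t₀))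
  have ht : |t - t₀| ≤ ‖(x, t) - (x₀, t₀)‖ := norm_snd_le ((x, t) - (x₀, t₀))
  generalize ‖(x, t) - (x₀, t₀)‖ = d at *
  obtain ⟨hp1, hp3⟩ := lt_min_iff.1 hp
  obtain ⟨hp1, hp2⟩ := lt_min_iff.1 hp1
  have htpos : 0 < t := by
    have := (abs_le.1 ht).1
    linarith
  obtain ⟨⟨y, hy, hgy⟩, hle'⟩ := aux_min g hgc x t htpos.le
  simp only [zero_apply, sub_zero, Real.norm_eq_abs]
  rw [abs_le]
  constructor
  · obtain ⟨z, hz, hzy⟩ := aux_move x x₀ y t t₀ htpos ht₀.le hy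
    rw [norm_sub_rev x₀ x, abs_sub_comm] at hzy
    have h1 := hlow z hz y (by linarith)
    have h2 : c / 2 * ‖z - y‖ ≤ c / 2 * (d + d) := by gcongr; linarith
    rw [← hgy]
    linarith
  · obtain ⟨z, hz, hzy⟩ := aux_move x₀ x y0 t₀ t ht₀ htpos.le hy0
    have h1 := (abs_le.1 (hup z (by rw [mem_ball_iff_norm]; linarith) y0
      (Metric.mem_ball_self hr))).2
    have h2 : c / 2 * ‖z - y0‖ ≤ c / 2 * (d + d) := by gcongr; linarith
    have h3 := hle' z hz
    linarith
end
end

section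
/- Suppose u is (Fréchet) differentiable at (x₀,t₀) with t₀ > 0 and ∇u(x₀,t₀) ≠ 0 (the spatial gradient). Then y₁ = x₀ − t₀ · ∇u(x₀,t₀)/|∇u(x₀,t₀)| is the unique minimizer for (x₀,t₀); that is, L(x₀,t₀) = {y₁}. -/
open scoped InnerProductSpace Topology ENNReal
open Filter

noncomputable section

theorem unique_minimizer_of_nonzero_gradient {n : ℕ} (hn : 0 < n) (g : Euc n → ℝ) (Dg : Euc n → Euc n)
    (hg : ∀ y, HasGradientAt g (Dg y) y) (hDg : Continuous Dg)
    (x₀ : Euc n) (t₀ : ℝ) (ht₀ : 0 < t₀) (v : Euc n)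
    (hdiff : DifferentiableAt ℝ (fun p : Euc n × ℝ => HLu g p.1 p.2) (x₀, t₀))
    (hv : HasGradientAt (fun x => HLu g x t₀) v x₀) (hv0 : v ≠ 0) :
    HLL g x₀ t₀ = {x₀ - t₀ • (‖v‖⁻¹ • v)} := by
  have hc : Continuous g := continuous_iff_continuousAt.2 fun y => (hg y).continuousAt
  have hcomp : ∀ x : Euc n, IsCompact (g '' Metric.closedBall x t₀) := fun x =>
    (isCompact_closedBall x t₀).image hc
  have hvn : 0 < ‖v‖ := norm_pos_iff.2 hv0
  have key : ∀ y ∈ HLL g x₀ t₀, y = x₀ - t₀ • (‖v‖⁻¹ • v) := by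
    rintro y ⟨hy, hgy⟩
    obtain ⟨e, he⟩ : ∃ e : Euc n, e = ‖v‖⁻¹ • v := ⟨_, rfl⟩
    have hen : ‖e‖ = 1 := by
      rw [he, norm_smul, norm_inv, norm_norm, inv_mul_cancel₀ hvn.ne']
    have hve : v = ‖v‖ • e := by
      rw [he, smul_smul, mul_inv_cancel₀ hvn.ne', one_smul]
    rw [← he]
    obtain ⟨d, hd⟩ : ∃ d : Euc n, d = t₀ • e - (x₀ - y) := ⟨_, rfl⟩
    have hle : ∀ s ∈ Set.Icc (0:ℝ) 1, HLu g (x₀ + s • d) t₀ ≤ HLu g x₀ t₀ := by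
      intro s hs
      rw [← hgy]
      refine csInf_le (hcomp _).bddBelow ⟨y, ?_, rfl⟩
      rw [Metric.mem_closedBall, dist_comm, dist_eq_norm]
      have h1 : x₀ + s • d - y = (1 - s) • (x₀ - y) + s • (t₀ • e) := by
        rw [hd]; module
      rw [h1]
      refine (norm_add_le _ _).trans ?_
      rw [norm_smul, norm_smul, norm_smul, hen, norm_sub_rev x₀ y, Real.norm_of_nonneg hs.1,
        Real.norm_of_nonneg (sub_nonneg.2 hs.2), Real.norm_of_nonneg ht₀.le]
      nlinarith [hs.1, hs.2]
    have hder : HasDerivAt (fun s : ℝ => HLu g (x₀ + s • d) t₀) ⟪v, d⟫_ℝ 0 := by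
      have hl : HasDerivAt (fun s : ℝ => x₀ + s • d) d 0 := by
        simpa using ((hasDerivAt_id (0:ℝ)).smul_const d).const_add x₀
      have hv' : HasFDerivAt (fun x => HLu g x t₀) (InnerProductSpace.toDual ℝ (Euc n) v)
          (x₀ + (0:ℝ) • d) := by
        simpa using hv.hasFDerivAt
      simpa [Function.comp_def] using hv'.comp_hasDerivAt (0:ℝ) hl
    have hvd : ⟪v, d⟫_ℝ ≤ 0 := by
      have ht := (hasDerivWithinAt_iff_tendsto_slope' (by simp)).1 (hder.hasDerivWithinAt (s := Set.Ioi 0))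
      refine le_of_tendsto ht ?_
      filter_upwards [Ioo_mem_nhdsGT (zero_lt_one' ℝ)] with s hs
      rw [slope_def_field]
      have := hle s ⟨hs.1.le, hs.2.le⟩
      refine div_nonpos_of_nonpos_of_nonneg ?_ (by linarith [hs.1])
      simpa using this
    have hed : ⟪e, d⟫_ℝ ≤ 0 := by
      rw [hve, real_inner_smul_left] at hvd
      exact nonpos_of_mul_nonpos_right hvd hvn
    have hew : t₀ ≤ ⟪e, x₀ - y⟫_ℝ := by
      rw [hd, inner_sub_right, real_inner_smul_right, real_inner_self_eq_norm_sq, hen] at hed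
      linarith
    have hsq : ‖t₀ • e - (x₀ - y)‖ ^ 2 ≤ 0 := by
      rw [norm_sub_sq_real, norm_smul, hen, real_inner_smul_left, norm_sub_rev x₀ y,
        Real.norm_of_nonneg ht₀.le]
      nlinarith [norm_nonneg (y - x₀)]
    have h0 : t₀ • e - (x₀ - y) = 0 := by
      rw [← norm_eq_zero]
      exact pow_eq_zero_iff (two_ne_zero) |>.1 (le_antisymm hsq (sq_nonneg _))
    rw [sub_eq_zero.1 h0]; abel
  obtain ⟨y, hyb, hy⟩ : HLu g x₀ t₀ ∈ g '' Metric.closedBall x₀ t₀ :=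
    (hcomp x₀).sInf_mem ((Metric.nonempty_closedBall.2 ht₀.le).image g)
  have hyL : y ∈ HLL g x₀ t₀ := ⟨by simpa [dist_eq_norm] using hyb, hy⟩
  refine Set.eq_singleton_iff_unique_mem.2 ⟨?_, key⟩
  rw [← key y hyL]; exact hyL
end
end

section
/- Let y₀ ∈ ℝⁿ with Dg(y₀) ≠ 0 and suppose t̄ₛ(y₀) < tₛ(y₀) with t̄ₛ(y₀) < ∞. Then for every real t with t̄ₛ(y₀) ≤ t ≤ tₛ(y₀), the function u is not (Fréchet) differentiable at the point (X(y₀,t), t). (So the whole characteristic segment between the first and second termination points consists of nondifferentiable points of u.) -/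
open scoped InnerProductSpace Topology ENNReal
open Filter

noncomputable section

/-- The characteristic from `y₀`: `X(y₀,t) = y₀ + t • Dg(y₀)/|Dg(y₀)|`. -/
def charX {n : ℕ} (Dg : Euc n → Euc n) (y₀ : Euc n) (t : ℝ) : Euc n :=
  y₀ + t • (‖Dg y₀‖⁻¹ • Dg y₀)

/-- First termination time `t̄ₛ(y₀) = sup {t > 0 : L(X(y₀,t),t) = {y₀}}`, in `[0,∞]`
(`sup ∅ = 0`). -/
def tbar {n : ℕ} (g : Euc n → ℝ) (Dg : Euc n → Euc n) (y₀ : Euc n) : ℝ≥0∞ :=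
  sSup (ENNReal.ofReal '' {t : ℝ | 0 < t ∧ HLL g (charX Dg y₀ t) t = {y₀}})

/-- Second termination time `tₛ(y₀) = inf {t > 0 : y₀ ∉ L(X(y₀,t),t)}`, in `[0,∞]`
(`inf ∅ = ∞`). -/
def tsnd {n : ℕ} (g : Euc n → ℝ) (Dg : Euc n → Euc n) (y₀ : Euc n) : ℝ≥0∞ :=
  sInf (ENNReal.ofReal '' {t : ℝ | 0 < t ∧ y₀ ∉ HLL g (charX Dg y₀ t) t})

lemma aux_mem {n : ℕ} (y₀ v y : Euc n) (hv : ‖v‖ = 1) (t : ℝ) (ht : 0 ≤ t) :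
    ‖y - (y₀ + t • v)‖ ≤ t ↔ ‖y - y₀‖ ^ 2 ≤ 2 * t * ⟪y - y₀, v⟫_ℝ := by
  have h : ‖y - (y₀ + t • v)‖ ^ 2 = ‖y - y₀‖ ^ 2 - 2 * t * ⟪y - y₀, v⟫_ℝ + t ^ 2 := by
    rw [← sub_sub, norm_sub_sq_real, inner_smul_right, norm_smul, hv, mul_one, Real.norm_eq_abs,
      sq_abs]
    ring
  rw [← sq_le_sq₀ (norm_nonneg _) ht, h]
  constructor <;> intro h <;> linarith

lemma aux_mem_lt {n : ℕ} (y₀ v y : Euc n) (hv : ‖v‖ = 1) (t : ℝ) (ht : 0 ≤ t) :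
    ‖y - (y₀ + t • v)‖ < t ↔ ‖y - y₀‖ ^ 2 < 2 * t * ⟪y - y₀, v⟫_ℝ := by
  have h : ‖y - (y₀ + t • v)‖ ^ 2 = ‖y - y₀‖ ^ 2 - 2 * t * ⟪y - y₀, v⟫_ℝ + t ^ 2 := by
    rw [← sub_sub, norm_sub_sq_real, inner_smul_right, norm_smul, hv, mul_one, Real.norm_eq_abs,
      sq_abs]
    ring
  rw [← sq_lt_sq₀ (norm_nonneg _) ht, h]
  constructor <;> intro h <;> linarith

lemma aux_le {n : ℕ} (g : Euc n → ℝ) (hg : Continuous g) (x y : Euc n) (t : ℝ)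
    (h : ‖y - x‖ ≤ t) : HLu g x t ≤ g y := by
  apply csInf_le
  · exact ((isCompact_closedBall x t).image hg).bddBelow
  · exact ⟨y, by simpa [dist_eq_norm] using h, rfl⟩

lemma aux_eq {n : ℕ} (g : Euc n → ℝ) (x y : Euc n) (t : ℝ)
    (h : ‖y - x‖ ≤ t) (hm : ∀ z, ‖z - x‖ ≤ t → g y ≤ g z) : HLu g x t = g y := by
  apply IsLeast.csInf_eq
  refine ⟨⟨y, by simpa [dist_eq_norm] using h, rfl⟩, ?_⟩
  rintro _ ⟨z, hz, rfl⟩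
  exact hm z (by simpa [dist_eq_norm] using hz)

lemma aux_grad {n : ℕ} (g : Euc n → ℝ) (Dg : Euc n → Euc n)
    (hg : ∀ y, HasGradientAt g (Dg y) y) (hc : Continuous g) (x y : Euc n) (t : ℝ)
    (h : ‖y - x‖ ≤ t) (he : HLu g x t = g y) (L : Euc n →L[ℝ] ℝ)
    (hL : HasFDerivAt (fun z => HLu g z t) L x) :
    InnerProductSpace.toDual ℝ (Euc n) (Dg y) = L := by
  have h1 : HasFDerivAt (fun z => g (z + (y - x))) (InnerProductSpace.toDual ℝ (Euc n) (Dg y)) x := by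
    rw [hasFDerivAt_comp_add_right]
    have := (hg y).hasFDerivAt
    simpa using this
  have h2 := h1.sub hL
  have h3 : IsLocalMin (fun z => g (z + (y - x)) - HLu g z t) x := by
    refine Filter.Eventually.of_forall fun z => ?_
    have := aux_le g hc z (z + (y - x)) t (by simpa using h)
    have e : x + (y - x) = y := by abel
    simp only [e, he]
    linarith
  exact sub_eq_zero.1 (h3.hasFDerivAt_eq_zero h2)

theorem segment_between_termination_points_nondifferentiable {n : ℕ} (hn : 0 < n) (g : Euc n → ℝ) (Dg : Euc n → Euc n)
    (hg : ∀ y, HasGradientAt g (Dg y) y) (hDg : Continuous Dg)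
    (y₀ : Euc n) (hy : Dg y₀ ≠ 0)
    (hlt : tbar g Dg y₀ < tsnd g Dg y₀) (hfin : tbar g Dg y₀ < ⊤) :
    ∀ t : ℝ, 0 < t → tbar g Dg y₀ ≤ ENNReal.ofReal t → ENNReal.ofReal t ≤ tsnd g Dg y₀ →
      ¬ DifferentiableAt ℝ (fun p : Euc n × ℝ => HLu g p.1 p.2) (charX Dg y₀ t, t) := by
  classical
  have hc : Continuous g := continuous_iff_continuousAt.2 fun y => (hg y).hasFDerivAt.continuousAt
  set v : Euc n := ‖Dg y₀‖⁻¹ • Dg y₀ with hvdef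
  have hv : ‖v‖ = 1 := by
    rw [hvdef, norm_smul, norm_inv, norm_norm, inv_mul_cancel₀ (norm_ne_zero_iff.2 hy)]
  have hX : ∀ t, charX Dg y₀ t = y₀ + t • v := fun t => rfl
  have hy0 : ∀ t : ℝ, 0 ≤ t → ‖y₀ - (y₀ + t • v)‖ ≤ t := fun t ht => by
    rw [aux_mem _ _ _ hv _ ht]; simp
  -- below the second termination time, y₀ is a minimizer
  have hmin : ∀ t : ℝ, 0 < t → ENNReal.ofReal t < tsnd g Dg y₀ →
      y₀ ∈ HLL g (charX Dg y₀ t) t := by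
    intro t ht hts
    by_contra hcon
    exact absurd (sInf_le (Set.mem_image_of_mem _ ⟨ht, hcon⟩) : tsnd g Dg y₀ ≤ ENNReal.ofReal t) (not_le.2 hts)
  have hmin' : ∀ t : ℝ, 0 < t → ENNReal.ofReal t < tsnd g Dg y₀ →
      ∀ z, ‖z - (y₀ + t • v)‖ ≤ t → g y₀ ≤ g z := by
    intro t ht hts z hz
    rw [(hmin t ht hts).2]
    exact aux_le g hc _ _ _ hz
  have hmin2 : ∀ t : ℝ, 0 < t → ENNReal.ofReal t ≤ tsnd g Dg y₀ →
      ∀ z, ‖z - (y₀ + t • v)‖ ≤ t → g y₀ ≤ g z := by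
    intro t ht hts z hz
    have hz' : z ∈ closure (Metric.ball (y₀ + t • v) t) := by
      rw [closure_ball _ ht.ne']; simpa [dist_eq_norm] using hz
    have hcl : IsClosed {z | g y₀ ≤ g z} := isClosed_le continuous_const hc
    refine closure_minimal (fun w hw => ?_) hcl hz'
    have hw' : ‖w - (y₀ + t • v)‖ < t := by simpa [dist_eq_norm] using hw
    rw [aux_mem_lt _ _ _ hv _ ht.le] at hw'
    by_cases hwy : w = y₀
    · simp [hwy]
    have hpos : 0 < ‖w - y₀‖ ^ 2 := by
      have := norm_pos_iff.2 (sub_ne_zero.2 hwy)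
      positivity
    have hip : 0 < ⟪w - y₀, v⟫_ℝ := by
      by_contra hcon
      nlinarith
    have hs : 0 < ‖w - y₀‖ ^ 2 / (2 * ⟪w - y₀, v⟫_ℝ) := by positivity
    have hst : ‖w - y₀‖ ^ 2 / (2 * ⟪w - y₀, v⟫_ℝ) < t := by
      rw [div_lt_iff₀ (by positivity)]; linarith
    refine hmin' _ hs (lt_of_lt_of_le ((ENNReal.ofReal_lt_ofReal_iff ht).2 hst) hts) w ?_
    rw [aux_mem _ _ _ hv _ hs.le]
    apply le_of_eq
    field_simp
  -- critical minimizers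
  have hK : ∀ s : ℝ, 0 < s → tbar g Dg y₀ < ENNReal.ofReal s → ENNReal.ofReal s < tsnd g Dg y₀ →
      ∃ y, ‖y - (y₀ + s • v)‖ ≤ s ∧ g y = g y₀ ∧ Dg y = 0 := by
    intro s hs h1 h2
    have hm := hmin s hs h2
    have hne : HLL g (charX Dg y₀ s) s ≠ {y₀} := by
      intro hcon
      exact absurd (le_sSup (Set.mem_image_of_mem _ ⟨hs, hcon⟩) : ENNReal.ofReal s ≤ tbar g Dg y₀) (not_le.2 h1)
    obtain ⟨y, hyL, hyne⟩ : ∃ y ∈ HLL g (charX Dg y₀ s) s, y ≠ y₀ := by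
      by_contra! hcon
      exact hne (Set.eq_singleton_iff_unique_mem.2 ⟨hm, hcon⟩)
    have hgy : g y = g y₀ := hyL.2.trans hm.2.symm
    have hyb : ‖y - (y₀ + s • v)‖ ≤ s := hyL.1
    refine ⟨y, hyb, hgy, ?_⟩
    obtain ⟨r, hr1, hr2⟩ := exists_between h2
    have hrt : r ≠ ⊤ := (lt_of_lt_of_le hr2 le_top).ne
    have hsr : s < r.toReal := (ENNReal.ofReal_lt_iff_lt_toReal hs.le hrt).1 hr1
    have hr0 : 0 < r.toReal := hs.trans hsr
    have hpos : 0 < ‖y - y₀‖ ^ 2 := by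
      have := norm_pos_iff.2 (sub_ne_zero.2 hyne)
      positivity
    rw [aux_mem _ _ _ hv _ hs.le] at hyb
    have hip : 0 < ⟪y - y₀, v⟫_ℝ := by
      by_contra hcon
      nlinarith
    have hin : ‖y - (y₀ + r.toReal • v)‖ < r.toReal := by
      rw [aux_mem_lt _ _ _ hv _ hr0.le]
      nlinarith
    have hloc : IsLocalMin g y := by
      have hnb : Metric.ball (y₀ + r.toReal • v) r.toReal ∈ 𝓝 y :=
        Metric.isOpen_ball.mem_nhds (by simpa [dist_eq_norm] using hin)
      filter_upwards [hnb] with z hz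
      rw [hgy]
      exact hmin' r.toReal hr0 (by rwa [ENNReal.ofReal_toReal hrt]) z
        (by simpa [dist_eq_norm] using (le_of_lt hz))
    have := hloc.hasFDerivAt_eq_zero (hg y).hasFDerivAt
    simpa using this
  intro t ht htb hts hdiff
  -- a critical minimizer at time t
  obtain ⟨y, hyb, hgy, hDy⟩ : ∃ y, ‖y - (y₀ + t • v)‖ ≤ t ∧ g y = g y₀ ∧ Dg y = 0 := by
    obtain ⟨r, hr1, hr2⟩ := exists_between hlt
    have hrt : r ≠ ⊤ := (lt_of_lt_of_le hr2 le_top).ne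
    obtain ⟨T, hT0, rfl⟩ : ∃ T : ℝ, 0 < T ∧ r = ENNReal.ofReal T :=
      ⟨r.toReal, ENNReal.toReal_pos (lt_of_le_of_lt zero_le hr1).ne' hrt,
        (ENNReal.ofReal_toReal hrt).symm⟩
    set K : Set (Euc n) := Metric.closedBall (y₀ + T • v) T ∩ {y | g y = g y₀ ∧ Dg y = 0} with hKd
    have hKc : IsCompact K := (isCompact_closedBall _ _).inter_right
      ((isClosed_eq hc continuous_const).inter (isClosed_eq hDg continuous_const))
    have hKm : ∀ y, y ∈ K ↔ ‖y - (y₀ + T • v)‖ ≤ T ∧ g y = g y₀ ∧ Dg y = 0 := by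
      intro y; simp [hKd, dist_eq_norm]
    have hKn : K.Nonempty := by
      obtain ⟨y, h⟩ := hK T hT0 hr1 hr2
      exact ⟨y, (hKm y).2 h⟩
    have hip : ∀ y ∈ K, 0 < ⟪y - y₀, v⟫_ℝ := by
      intro y hyK
      obtain ⟨h1, h2, h3⟩ := (hKm y).1 hyK
      rw [aux_mem _ _ _ hv _ hT0.le] at h1
      have hyne : y ≠ y₀ := by rintro rfl; exact hy h3
      have hpos : 0 < ‖y - y₀‖ ^ 2 := by
        have := norm_pos_iff.2 (sub_ne_zero.2 hyne)
        positivity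
      by_contra hcon
      nlinarith
    have hfc : ContinuousOn (fun y => ‖y - y₀‖ ^ 2 / (2 * ⟪y - y₀, v⟫_ℝ)) K := by
      apply ContinuousOn.div
      · fun_prop
      · fun_prop
      · intro y hyK
        have := hip y hyK
        positivity
    obtain ⟨y, hyK, hymin⟩ := hKc.exists_isMinOn hKn hfc
    obtain ⟨h1, h2, h3⟩ := (hKm y).1 hyK
    have hipy := hip y hyK
    refine ⟨y, ?_, h2, h3⟩
    rw [aux_mem _ _ _ hv _ ht.le]
    rw [aux_mem _ _ _ hv _ hT0.le] at h1
    set F := ‖y - y₀‖ ^ 2 / (2 * ⟪y - y₀, v⟫_ℝ) with hF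
    suffices hFt : F ≤ t by
      rw [hF, div_le_iff₀ (by positivity)] at hFt
      linarith
    have hFT : F ≤ T := by
      rw [hF, div_le_iff₀ (by positivity)]
      linarith
    by_contra! hlt'
    have hs0 : 0 < (t + F) / 2 := by linarith
    have hsT : (t + F) / 2 < T := by linarith
    obtain ⟨z, hz1, hz2, hz3⟩ := hK ((t + F) / 2) hs0
      (lt_of_le_of_lt htb ((ENNReal.ofReal_lt_ofReal_iff hs0).2 (by linarith)))
      (lt_trans ((ENNReal.ofReal_lt_ofReal_iff hT0).2 hsT) hr2)
    rw [aux_mem _ _ _ hv _ hs0.le] at hz1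
    have hzi : 0 ≤ ⟪z - y₀, v⟫_ℝ := by
      by_contra hcon
      nlinarith [sq_nonneg ‖z - y₀‖]
    have hzK : z ∈ K := by
      rw [hKm, aux_mem _ _ _ hv _ hT0.le]
      exact ⟨by nlinarith, hz2, hz3⟩
    have hzp := hip z hzK
    have h5 : F ≤ ‖z - y₀‖ ^ 2 / (2 * ⟪z - y₀, v⟫_ℝ) := hymin hzK
    have h6 : ‖z - y₀‖ ^ 2 / (2 * ⟪z - y₀, v⟫_ℝ) ≤ (t + F) / 2 := by
      rw [div_le_iff₀ (by positivity)]
      linarith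
    linarith
  rw [hX] at hdiff
  have hu : HLu g (y₀ + t • v) t = g y₀ := aux_eq g _ _ _ (hy0 t ht.le) (hmin2 t ht hts)
  have hd : DifferentiableAt ℝ (fun z => HLu g z t) (y₀ + t • v) :=
    DifferentiableAt.comp (f := fun z : Euc n => (z, t)) (y₀ + t • v) hdiff (by fun_prop)
  have e1 := aux_grad g Dg hg hc _ y₀ t (hy0 t ht.le) hu _ hd.hasFDerivAt
  have e2 := aux_grad g Dg hg hc _ y t hyb (hu.trans hgy.symm) _ hd.hasFDerivAt
  have := (InnerProductSpace.toDual ℝ (Euc n)).injective (e1.trans e2.symm)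
  exact hy (this.trans hDy)
end
end

section
/- For any y₀ ∈ ℝⁿ with Dg(y₀) ≠ 0, one has limsup_{y → y₀} t̄ₛ(y) = limsup_{y → y₀} tₛ(y) = tₛ(y₀), where the limsups are taken in the extended reals [0,∞] along the punctured neighborhood filter of y₀ (this also holds when tₛ(y₀) = ∞; note Dg ≠ 0 near y₀ so t̄ₛ and tₛ are defined there). -/
open scoped InnerProductSpace Topology ENNReal
open Filter

noncomputable section

lemma aux_descent {n : ℕ} {g : Euc n → ℝ} {G y v : Euc n} (h : HasGradientAt g G y)
    (hv : ⟪G, v⟫_ℝ < 0) : ∀ᶠ s : ℝ in 𝓝[>] 0, g (y + s • v) < g y := by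
  have h1 : HasDerivAt (fun s : ℝ => y + s • v) v 0 := by
    simpa using ((hasDerivAt_id (0:ℝ)).smul_const v).const_add y
  have h0 : HasFDerivAt g (InnerProductSpace.toDual ℝ (Euc n) G) (y + (0:ℝ) • v) := by
    simpa using h.hasFDerivAt
  have h2 : HasDerivAt (fun s : ℝ => g (y + s • v)) (⟪G, v⟫_ℝ) 0 := by
    have h00 := h0.comp_hasDerivAt (0:ℝ) h1
    rw [InnerProductSpace.toDual_apply_apply] at h00
    exact h00
  have h3 := (hasDerivAt_iff_tendsto_slope.1 h2).eventually (gt_mem_nhds hv)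
  have h4 : ∀ᶠ s : ℝ in 𝓝[>] 0, slope (fun s : ℝ => g (y + s • v)) 0 s < 0 :=
    h3.filter_mono (nhdsWithin_mono _ (fun s hs => ne_of_gt hs))
  filter_upwards [h4, self_mem_nhdsWithin] with s hs hs0
  have hs0 : 0 < s := hs0
  rw [slope_def_field, div_neg_iff] at hs
  simp only [sub_zero, zero_smul, add_zero] at hs
  rcases hs with hs | hs <;> linarith

lemma aux_mem_s7 {n : ℕ} {g : Euc n → ℝ} (hc : Continuous g) (x y : Euc n) (t : ℝ) :
    y ∈ HLL g x t ↔ ‖y - x‖ ≤ t ∧ ∀ z, ‖z - x‖ ≤ t → g y ≤ g z := by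
  unfold HLL HLu
  constructor
  · rintro ⟨h1, h2⟩
    refine ⟨h1, fun z hz => ?_⟩
    rw [h2]
    refine csInf_le ((isCompact_closedBall x t).image hc).bddBelow ⟨z, ?_, rfl⟩
    rwa [mem_closedBall_iff_norm]
  · rintro ⟨h1, h2⟩
    have hl : IsLeast (g '' Metric.closedBall x t) (g y) := by
      refine ⟨⟨y, mem_closedBall_iff_norm.2 h1, rfl⟩, ?_⟩
      rintro _ ⟨z, hz, rfl⟩
      rw [mem_closedBall_iff_norm] at hz
      exact h2 z hz
    exact ⟨h1, hl.csInf_eq.symm⟩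

lemma aux_sq {n : ℕ} (w v : Euc n) (hv : ‖v‖ = 1) (t : ℝ) :
    ‖w - t • v‖ ^ 2 = ‖w‖ ^ 2 - 2 * t * ⟪w, v⟫_ℝ + t ^ 2 := by
  rw [norm_sub_sq_real, inner_smul_right, norm_smul, hv, Real.norm_eq_abs, mul_one, sq_abs]
  ring

lemma aux_ball {n : ℕ} (z y v : Euc n) (hv : ‖v‖ = 1) {t : ℝ} (ht : 0 ≤ t) :
    ‖z - (y + t • v)‖ ≤ t ↔ ‖z - y‖ ^ 2 ≤ 2 * t * ⟪z - y, v⟫_ℝ := by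
  rw [← sub_sub, ← sq_le_sq₀ (norm_nonneg _) ht, aux_sq _ _ hv]
  constructor <;> intro h <;> linarith

lemma aux_ball_lt {n : ℕ} (z y v : Euc n) (hv : ‖v‖ = 1) {t : ℝ} (ht : 0 ≤ t) :
    ‖z - (y + t • v)‖ < t ↔ ‖z - y‖ ^ 2 < 2 * t * ⟪z - y, v⟫_ℝ := by
  rw [← sub_sub, ← sq_lt_sq₀ (norm_nonneg _) ht, aux_sq _ _ hv]
  constructor <;> intro h <;> linarith

lemma aux_strict {n : ℕ} (z y v : Euc n) (hv : ‖v‖ = 1) {s t : ℝ} (hs : 0 ≤ s) (hst : s < t)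
    (hz : z ≠ y) (h : ‖z - (y + s • v)‖ ≤ s) : ‖z - (y + t • v)‖ < t := by
  rw [aux_ball _ _ _ hv hs] at h
  rw [aux_ball_lt _ _ _ hv (hs.trans hst.le)]
  have h1 : 0 < ‖z - y‖ ^ 2 := by
    have := norm_pos_iff.2 (sub_ne_zero.2 hz)
    positivity
  have h2 : 0 < ⟪z - y, v⟫_ℝ := by
    by_contra hcon
    nlinarith
  nlinarith

lemma aux_unit {n : ℕ} {G : Euc n} (h : G ≠ 0) : ‖‖G‖⁻¹ • G‖ = 1 := by
  rw [norm_smul, norm_inv, norm_norm, inv_mul_cancel₀ (norm_ne_zero_iff.2 h)]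

lemma aux_self {n : ℕ} (y v : Euc n) (hv : ‖v‖ = 1) {t : ℝ} (ht : 0 ≤ t) :
    ‖y - (y + t • v)‖ ≤ t := by
  rw [aux_ball _ _ _ hv ht]; simp

lemma aux_lagrange {n : ℕ} {g : Euc n → ℝ} {G x y : Euc n} {T : ℝ} (hT : 0 ≤ T)
    (h : HasGradientAt g G y) (hG : G ≠ 0) (hy : ‖y - x‖ ≤ T)
    (hmin : ∀ z, ‖z - x‖ ≤ T → g y ≤ g z) : x = y + T • (‖G‖⁻¹ • G) := by
  have hv := aux_unit hG
  have hGG : ‖G‖ • (‖G‖⁻¹ • G) = G := by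
    rw [smul_smul, mul_inv_cancel₀ (norm_ne_zero_iff.2 hG), one_smul]
  set v := ‖G‖⁻¹ • G with hvdef
  have hGp : 0 < ‖G‖ := norm_pos_iff.2 hG
  have h1 : 0 ≤ ⟪G, (x - T • v) - y⟫_ℝ := by
    by_contra hcon
    push Not at hcon
    have h2 := aux_descent h hcon
    have h3 : ∀ᶠ s : ℝ in 𝓝[>] 0, s < 1 := (gt_mem_nhds one_pos).filter_mono nhdsWithin_le_nhds
    obtain ⟨s, ⟨hs1, hs2⟩, hs0⟩ := ((h2.and h3).and self_mem_nhdsWithin).exists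
    have hs0 : 0 < s := hs0
    refine absurd (hmin (y + s • (x - T • v - y)) ?_) (not_le.2 hs1)
    have e : y + s • (x - T • v - y) - x = (1 - s) • (y - x) - s • (T • v) := by module
    rw [e]
    refine (norm_sub_le _ _).trans ?_
    rw [norm_smul, norm_smul, norm_smul, hv, Real.norm_of_nonneg (by linarith),
      Real.norm_of_nonneg hs0.le, Real.norm_of_nonneg hT]
    nlinarith
  have h2 : T ≤ ⟪x - y, v⟫_ℝ := by
    have e : ⟪G, (x - T • v) - y⟫_ℝ = ‖G‖ * (⟪x - y, v⟫_ℝ - T) := by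
      conv_lhs => rw [← hGG]
      have : x - T • v - y = (x - y) - T • v := by module
      rw [this, inner_smul_left, inner_sub_right, inner_smul_right, real_inner_self_eq_norm_sq, hv,
        real_inner_comm]
      simp
    rw [e] at h1
    nlinarith [nonneg_of_mul_nonneg_right h1 hGp]
  have h3 := aux_sq (x - y) v hv T
  have h4 : ‖x - y‖ ≤ T := by rwa [norm_sub_rev]
  have h5 : ‖x - y - T • v‖ ^ 2 ≤ 0 := by nlinarith [norm_nonneg (x - y)]
  have h6 : x - y - T • v = 0 := by
    rw [← norm_eq_zero]
    exact pow_eq_zero_iff (two_ne_zero) |>.1 (le_antisymm h5 (sq_nonneg _))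
  rw [sub_sub, sub_eq_zero] at h6
  exact h6

lemma aux_le_s7 {n : ℕ} {g : Euc n → ℝ} {Dg : Euc n → Euc n} (hc : Continuous g) {y : Euc n}
    (hy : Dg y ≠ 0) : tbar g Dg y ≤ tsnd g Dg y := by
  have hv := aux_unit hy
  refine sSup_le ?_
  rintro _ ⟨t, ⟨ht, hL⟩, rfl⟩
  refine le_sInf ?_
  rintro _ ⟨s, ⟨hs, hL'⟩, rfl⟩
  apply ENNReal.ofReal_le_ofReal
  by_contra hcon
  push Not at hcon
  apply hL'
  have h1 : y ∈ HLL g (charX Dg y t) t := by rw [hL]; rfl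
  rw [aux_mem_s7 hc] at h1 ⊢
  refine ⟨aux_self _ _ hv hs.le, fun z hz => ?_⟩
  by_cases hzy : z = y
  · rw [hzy]
  · exact h1.2 z (aux_strict z y _ hv hs.le hcon hzy hz).le

lemma aux_usc {n : ℕ} {g : Euc n → ℝ} {Dg : Euc n → Euc n} (hc : Continuous g)
    (hDg : Continuous Dg) {y₀ : Euc n} (hy : Dg y₀ ≠ 0) :
    limsup (fun y => tsnd g Dg y) (𝓝 y₀) ≤ tsnd g Dg y₀ := by
  refine le_of_forall_gt fun c hcc => ?_
  obtain ⟨_, ⟨t, ⟨ht, hL⟩, rfl⟩, htc⟩ := sInf_lt_iff.1 hcc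
  obtain ⟨c', hc1, hc2⟩ := exists_between htc
  refine lt_of_le_of_lt ?_ hc2
  obtain ⟨t', ht'0, htt', ht'c⟩ := ENNReal.lt_iff_exists_real_btwn.1 hc1
  have htt : t < t' := (ENNReal.ofReal_lt_ofReal_iff_of_nonneg ht.le).1 htt'
  have hv := aux_unit hy
  rw [aux_mem_s7 hc] at hL
  push Not at hL
  obtain ⟨z, hz, hgz⟩ := hL (aux_self _ _ hv ht.le)
  have hzy : z ≠ y₀ := by rintro rfl; exact lt_irrefl _ hgz
  have hz' := aux_strict z y₀ _ hv ht.le htt hzy hz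
  have hcont : ContinuousAt (fun y => ‖z - (y + t' • (‖Dg y‖⁻¹ • Dg y))‖) y₀ := by
    have : ContinuousAt (fun y => ‖Dg y‖⁻¹) y₀ :=
      hDg.norm.continuousAt.inv₀ (norm_ne_zero_iff.2 hy)
    have h2 : ContinuousAt Dg y₀ := hDg.continuousAt
    fun_prop
  refine limsup_le_of_le (h := ?_)
  filter_upwards [hcont.eventually (gt_mem_nhds hz'), hc.continuousAt.eventually (lt_mem_nhds hgz)]
    with y h1 h2
  have hnot : y ∉ HLL g (charX Dg y t') t' := by
    intro hcon
    rw [aux_mem_s7 hc] at hcon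
    exact absurd (hcon.2 z h1.le) (not_le.2 h2)
  have hle : tsnd g Dg y ≤ ENNReal.ofReal t' := sInf_le ⟨t', ⟨ht.trans htt, hnot⟩, rfl⟩
  exact hle.trans ht'c.le

lemma aux_exists {n : ℕ} {g : Euc n → ℝ} {Dg : Euc n → Euc n} (hc : Continuous g)
    (hg : ∀ y, HasGradientAt g (Dg y) y) {y₀ : Euc n} (hy : Dg y₀ ≠ 0)
    {t T T1 δ : ℝ} (ht : 0 < t) (htT : t < T) (hTT : T < T1) (hδ : 0 < δ)
    (hnz : ∀ y, ‖y - y₀‖ < δ → Dg y ≠ 0)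
    (hL : y₀ ∈ HLL g (charX Dg y₀ T1) T1) :
    ∃ y, y ≠ y₀ ∧ ‖y - y₀‖ < δ ∧ HLL g (charX Dg y t) t = {y} := by
  have hv := aux_unit hy
  have hT : 0 < T := ht.trans htT
  have hT1 : 0 < T1 := hT.trans hTT
  rw [aux_mem_s7 hc] at hL
  unfold charX at hL
  have hneg : ⟪Dg y₀, -(‖Dg y₀‖⁻¹ • Dg y₀)⟫_ℝ < 0 := by
    have := norm_pos_iff.2 hy
    rw [inner_neg_right, inner_smul_right, real_inner_self_eq_norm_sq]
    rw [neg_lt_zero]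
    positivity
  have hd := aux_descent (hg y₀) hneg
  set v := ‖Dg y₀‖⁻¹ • Dg y₀ with hvdef
  have hpos : 0 < δ ^ 2 * (T1 - T) / (2 * T * T1) := by
    have : 0 < T1 - T := by linarith
    positivity
  have e1 : ∀ᶠ s : ℝ in 𝓝[>] 0, s < δ ^ 2 * (T1 - T) / (2 * T * T1) :=
    (gt_mem_nhds hpos).filter_mono nhdsWithin_le_nhds
  have e2 : ∀ᶠ s : ℝ in 𝓝[>] 0, s < T := (gt_mem_nhds hT).filter_mono nhdsWithin_le_nhds
  obtain ⟨ε, ⟨⟨hε1, hε2⟩, hε3⟩, hε0⟩ := (((hd.and e1).and e2).and self_mem_nhdsWithin).exists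
  have hε0 : 0 < ε := hε0
  rw [lt_div_iff₀ (by positivity)] at hε2
  set x := y₀ + (T - ε) • v with hx
  have hpx : ‖(y₀ + ε • (-v)) - x‖ ≤ T := by
    have : (y₀ + ε • (-v)) - x = (-T) • v := by rw [hx]; module
    rw [this, norm_smul, hv, norm_neg, Real.norm_of_nonneg hT.le, mul_one]
  obtain ⟨y, hyB, hymin⟩ := (isCompact_closedBall x T).exists_isMinOn
    ⟨_, mem_closedBall_iff_norm.2 hpx⟩ hc.continuousOn
  rw [mem_closedBall_iff_norm] at hyB
  have hymin : ∀ z, ‖z - x‖ ≤ T → g y ≤ g z := fun z hz =>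
    hymin (mem_closedBall_iff_norm.2 hz)
  have hnear : ∀ z, ‖z - x‖ ≤ T → g z ≤ g y → z ≠ y₀ ∧ ‖z - y₀‖ < δ := by
    intro z hz hgz
    have hlt : g z < g y₀ := hgz.trans_lt ((hymin _ hpx).trans_lt hε1)
    refine ⟨by rintro rfl; exact lt_irrefl _ hlt, ?_⟩
    have h1 : ¬ ‖z - (y₀ + T1 • v)‖ ≤ T1 := fun h => absurd (hL.2 z h) (not_le.2 hlt)
    rw [aux_ball _ _ _ hv hT1.le, not_le] at h1
    rw [hx, ← sub_sub, ← sq_le_sq₀ (norm_nonneg _) hT.le, aux_sq _ _ hv] at hz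
    rw [← sq_lt_sq₀ (norm_nonneg _) hδ.le]
    have a1 : (T - ε) * (2 * T1 * ⟪z - y₀, v⟫_ℝ) ≤ (T - ε) * ‖z - y₀‖ ^ 2 :=
      mul_le_mul_of_nonneg_left h1.le (by linarith)
    have a2 := mul_le_mul_of_nonneg_left hz hT1.le
    have a3 : (T1 - T) * ‖z - y₀‖ ^ 2 < (T1 - T) * δ ^ 2 := by
      have b1 : 0 ≤ ε * ‖z - y₀‖ ^ 2 := by positivity
      have b2 : 0 ≤ T1 * ε ^ 2 := by positivity
      nlinarith
    exact lt_of_mul_lt_mul_left a3 (by linarith)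
  obtain ⟨hne, hyδ⟩ := hnear y hyB le_rfl
  have hxy := aux_lagrange hT.le (hg y) (hnz y hyδ) hyB hymin
  have hvy := aux_unit (hnz y hyδ)
  refine ⟨y, hne, hyδ, ?_⟩
  ext z
  rw [aux_mem_s7 hc, Set.mem_singleton_iff]
  unfold charX
  constructor
  · rintro ⟨h1, h2⟩
    by_contra hzy
    have h3 := aux_strict z y _ hvy ht.le htT hzy h1
    rw [← hxy] at h3
    have h4 := h2 y (aux_self _ _ hvy ht.le)
    have hzn := hnz z (hnear z h3.le h4).2
    have h5 := aux_lagrange hT.le (hg z) hzn h3.le (fun w hw => h4.trans (hymin w hw))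
    have h6 := aux_unit hzn
    have h7 : z - x = -(T • (‖Dg z‖⁻¹ • Dg z)) := by
      conv_lhs => rw [h5]
      abel
    rw [h7, norm_neg, norm_smul, h6, Real.norm_of_nonneg hT.le] at h3
    linarith
  · rintro rfl
    refine ⟨aux_self _ _ hvy ht.le, fun w hw => ?_⟩
    by_cases hwz : w = z
    · rw [hwz]
    · apply hymin
      rw [hxy]
      exact (aux_strict w z _ hvy ht.le htT hwz hw).le

lemma aux_lsc {n : ℕ} {g : Euc n → ℝ} {Dg : Euc n → Euc n} (hc : Continuous g)
    (hg : ∀ y, HasGradientAt g (Dg y) y) (hDg : Continuous Dg) {y₀ : Euc n} (hy : Dg y₀ ≠ 0) :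
    tsnd g Dg y₀ ≤ limsup (fun y => tbar g Dg y) (𝓝[≠] y₀) := by
  refine le_of_forall_lt_imp_le_of_dense fun c hcc => ?_
  obtain ⟨t, ht0, hct, htc⟩ := ENNReal.lt_iff_exists_real_btwn.1 hcc
  obtain ⟨T, hT0, htT, hTc⟩ := ENNReal.lt_iff_exists_real_btwn.1 htc
  obtain ⟨T1, hT10, hTT, hT1c⟩ := ENNReal.lt_iff_exists_real_btwn.1 hTc
  have ht : 0 < t := ENNReal.ofReal_pos.1 (lt_of_le_of_lt zero_le hct)
  rw [ENNReal.ofReal_lt_ofReal_iff_of_nonneg ht0] at htT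
  rw [ENNReal.ofReal_lt_ofReal_iff_of_nonneg hT0] at hTT
  have hL : y₀ ∈ HLL g (charX Dg y₀ T1) T1 := by
    by_contra hcon
    have hle : tsnd g Dg y₀ ≤ ENNReal.ofReal T1 := sInf_le ⟨T1, ⟨by linarith, hcon⟩, rfl⟩
    exact absurd hle (not_le.2 hT1c)
  obtain ⟨δ, hδ, hnz⟩ := Metric.eventually_nhds_iff.1 (hDg.continuousAt.eventually_ne hy)
  refine le_limsup_of_frequently_le ?_
  rw [frequently_nhdsWithin_iff, (Metric.nhds_basis_ball).frequently_iff]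
  intro r hr
  obtain ⟨y, h1, h2, h3⟩ := aux_exists hc hg hy ht htT hTT (lt_min hδ hr)
    (fun y hy => hnz (by rw [dist_eq_norm]; exact hy.trans_le (min_le_left _ _))) hL
  refine ⟨y, mem_ball_iff_norm.2 (h2.trans_le (min_le_right _ _)), ?_, h1⟩
  exact hct.le.trans (le_sSup ⟨t, ⟨ht, h3⟩, rfl⟩)

theorem limsup_termination_times {n : ℕ} (hn : 0 < n) (g : Euc n → ℝ) (Dg : Euc n → Euc n)
    (hg : ∀ y, HasGradientAt g (Dg y) y) (hDg : Continuous Dg)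
    (y₀ : Euc n) (hy : Dg y₀ ≠ 0) :
    Filter.limsup (fun y => tbar g Dg y) (𝓝[≠] y₀) = tsnd g Dg y₀ ∧
    Filter.limsup (fun y => tsnd g Dg y) (𝓝[≠] y₀) = tsnd g Dg y₀ := by
  have hc : Continuous g := continuous_iff_continuousAt.2 fun y => (hg y).continuousAt
  have hne : ∀ᶠ y in 𝓝[≠] y₀, Dg y ≠ 0 :=
    (hDg.continuousAt.eventually_ne hy).filter_mono nhdsWithin_le_nhds
  have h1 := aux_lsc hc hg hDg hy
  have h2 : limsup (fun y => tbar g Dg y) (𝓝[≠] y₀) ≤ limsup (fun y => tsnd g Dg y) (𝓝[≠] y₀) :=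
    limsup_le_limsup (hne.mono fun y h => aux_le_s7 hc h)
  have h3 : limsup (fun y => tsnd g Dg y) (𝓝[≠] y₀) ≤ tsnd g Dg y₀ :=
    (limsup_le_limsup_of_le nhdsWithin_le_nhds).trans (aux_usc hc hDg hy)
  exact ⟨le_antisymm (h2.trans h3) h1, le_antisymm h3 (h1.trans h2)⟩
end
end

section
/- The set Σ ∪ T₁ ⊂ ℝⁿ × (0,∞) is the union of an at most countable, pairwise disjoint family of nonempty sets, each of which is either connected or almost connected (in the subspace metric of ℝⁿ⁺¹). -/
open scoped InnerProductSpace Topology ENNReal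
open Filter

noncomputable section

/-- The set `Σ` of points of `ℝⁿ × (0,∞)` at which `u` is not Fréchet differentiable. -/
def SigmaSet {n : ℕ} (g : Euc n → ℝ) : Set (Euc n × ℝ) :=
  {p | 0 < p.2 ∧ ¬ DifferentiableAt ℝ (fun q : Euc n × ℝ => HLu g q.1 q.2) p}

/-- `T(M)`: the set of termination points of characteristics from points with `Dg ≠ 0`. -/
def TM {n : ℕ} (g : Euc n → ℝ) (Dg : Euc n → Euc n) : Set (Euc n × ℝ) :=
  {p | ∃ y₀ : Euc n, ∃ t : ℝ, Dg y₀ ≠ 0 ∧ tbar g Dg y₀ < ⊤ ∧ 0 < t ∧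
    tbar g Dg y₀ ≤ ENNReal.ofReal t ∧ ENNReal.ofReal t ≤ tsnd g Dg y₀ ∧
    p = (charX Dg y₀ t, t)}

/-- `T₁`: the points of `T(M)` having a unique minimizer. -/
def T1 {n : ℕ} (g : Euc n → ℝ) (Dg : Euc n → Euc n) : Set (Euc n × ℝ) :=
  {p ∈ TM g Dg | ∃ y : Euc n, HLL g p.1 p.2 = {y}}

/-- A set `C` in a metric space is almost connected if for any decomposition `C = A ∪ B`
into two disjoint nonempty subsets, each closed in the subspace topology of `C`,
the infimum of distances between points of `A` and points of `B` is `0`. -/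
def AlmostConnected {α : Type*} [MetricSpace α] (C : Set α) : Prop :=
  ∀ A B : Set α, A ⊆ C → B ⊆ C → A.Nonempty → B.Nonempty → Disjoint A B → A ∪ B = C →
    closure A ∩ C ⊆ A → closure B ∩ C ⊆ B → sInf (Set.image2 dist A B) = 0


namespace HLaux

/-- Well-chained sets. -/
def WC {α : Type*} [MetricSpace α] (C : Set α) : Prop :=
  ∀ A B : Set α, A.Nonempty → B.Nonempty → A ∪ B = C →
    ∀ ε : ℝ, 0 < ε → ∃ a ∈ A, ∃ b ∈ B, dist a b < ε

section wc
variable {α : Type*} [MetricSpace α]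

lemma WC.almost {C : Set α} (h : WC C) : AlmostConnected C := by
  intro A B _ _ hA hB _ hU _ _
  apply le_antisymm
  · apply le_of_forall_pos_lt_add
    intro ε hε
    obtain ⟨a, ha, b, hb, hab⟩ := h A B hA hB hU ε hε
    rw [zero_add]
    refine lt_of_le_of_lt (csInf_le ⟨0, ?_⟩ (Set.mem_image2_of_mem ha hb)) hab
    rintro _ ⟨a, _, b, _, rfl⟩
    exact dist_nonneg
  · apply Real.sInf_nonneg
    rintro _ ⟨a, _, b, _, rfl⟩
    exact dist_nonneg

lemma WC.singleton (p : α) : WC ({p} : Set α) := by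
  rintro A B ⟨a, ha⟩ ⟨b, hb⟩ hU ε hε
  have h1 : a ∈ ({p} : Set α) := hU ▸ Or.inl ha
  have h2 : b ∈ ({p} : Set α) := hU ▸ Or.inr hb
  refine ⟨a, ha, b, hb, ?_⟩
  rw [Set.mem_singleton_iff.1 h1, Set.mem_singleton_iff.1 h2, dist_self]
  exact hε

lemma WC.sUnion {F : Set (Set α)} (p : α) (h : ∀ C ∈ F, WC C ∧ p ∈ C) : WC (⋃₀ F) := by
  have key : ∀ A B : Set α, p ∈ A → B.Nonempty → A ∪ B = ⋃₀ F →
    ∀ ε : ℝ, 0 < ε → ∃ a ∈ A, ∃ b ∈ B, dist a b < ε := by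
    rintro A B hp ⟨b, hb⟩ hU ε hε
    have hbF : b ∈ ⋃₀ F := hU ▸ Or.inr hb
    obtain ⟨C, hC, hbC⟩ := hbF
    obtain ⟨hW, hpC⟩ := h C hC
    obtain ⟨a, ha, b', hb', hd⟩ := hW (A ∩ C) (B ∩ C) ⟨p, hp, hpC⟩ ⟨b, hb, hbC⟩ (by
      rw [← Set.union_inter_distrib_right, hU]
      exact Set.inter_eq_right.2 (Set.subset_sUnion_of_mem hC)) ε hε
    exact ⟨a, ha.1, b', hb'.1, hd⟩
  intro A B hA hB hU ε hε
  obtain ⟨a, ha⟩ := hA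
  have haF : a ∈ ⋃₀ F := hU ▸ Or.inl ha
  obtain ⟨C, hC, haC⟩ := haF
  have hp : p ∈ A ∪ B := hU ▸ ⟨C, hC, (h C hC).2⟩
  rcases hp with hp | hp
  · exact key A B hp hB hU ε hε
  · obtain ⟨b, hb, a, ha, hd⟩ := key B A hp ⟨a, ha⟩ (by rw [Set.union_comm, hU]) ε hε
    exact ⟨a, ha, b, hb, by rwa [dist_comm]⟩

lemma WC.dense {C D : Set α} (hC : WC C) (h1 : D ⊆ C) (h2 : C ⊆ closure D) : WC D := by
  intro A B hA hB hU ε hε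
  obtain ⟨a0, ha0⟩ := hA
  obtain ⟨b0, hb0⟩ := hB
  obtain ⟨a, ha, b, hb, hd⟩ := hC (C ∩ closure A) (C ∩ closure B)
    ⟨a0, h1 (hU ▸ Or.inl ha0), subset_closure ha0⟩ ⟨b0, h1 (hU ▸ Or.inr hb0), subset_closure hb0⟩
    (by rw [← Set.inter_union_distrib_left, ← closure_union, hU]
        exact Set.inter_eq_left.2 h2) (ε/3) (by positivity)
  obtain ⟨a', ha', hda⟩ := Metric.mem_closure_iff.1 ha.2 (ε/3) (by positivity)
  obtain ⟨b', hb', hdb⟩ := Metric.mem_closure_iff.1 hb.2 (ε/3) (by positivity)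
  refine ⟨a', ha', b', hb', ?_⟩
  have := dist_triangle4 a' a b b'
  rw [dist_comm a' a] at this
  linarith

lemma merge {ι : Type*} {I : Set ι} (hI : I.Countable) (F : ι → Set α) (hF : ∀ i ∈ I, WC (F i)) :
    ∃ 𝒮 : Set (Set α), 𝒮.Countable ∧ (∀ C ∈ 𝒮, C.Nonempty) ∧
      𝒮.PairwiseDisjoint id ∧ (∀ C ∈ 𝒮, IsConnected C ∨ AlmostConnected C) ∧
      ⋃₀ 𝒮 = ⋃ i ∈ I, F i := by
  set S := ⋃ i ∈ I, F i with hS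
  let cf : α → Set (Set α) := fun p => {C | C ⊆ S ∧ WC C ∧ p ∈ C}
  let comp : α → Set α := fun p => ⋃₀ cf p
  have hW : ∀ p, WC (comp p) := fun p => WC.sUnion p (fun C hC => hC.2)
  have hself : ∀ p ∈ S, p ∈ comp p := fun p hp =>
    ⟨{p}, ⟨Set.singleton_subset_iff.2 hp, WC.singleton p, rfl⟩, rfl⟩
  have hsub : ∀ p, comp p ⊆ S := fun p => Set.sUnion_subset (fun C hC => hC.1)
  have hle : ∀ p q, q ∈ comp p → comp p ⊆ comp q := fun p q hq =>
    Set.subset_sUnion_of_mem (⟨hsub p, hW p, hq⟩ : comp p ∈ cf q)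
  have heq : ∀ p q, q ∈ comp p → comp p = comp q := by
    intro p q hq
    apply Set.Subset.antisymm (hle p q hq)
    have hqS := hsub p hq
    have hpS : p ∈ S := by
      obtain ⟨C, hC, _⟩ := hq
      exact hC.1 hC.2.2
    exact hle q p (hle p q hq (hself p hpS))
  refine ⟨comp '' S, ?_, ?_, ?_, ?_, ?_⟩
  · have : comp '' S ⊆ ⋃ i ∈ I, comp '' (F i) := by
      rintro _ ⟨p, hp, rfl⟩
      obtain ⟨i, hi, hpi⟩ := Set.mem_iUnion₂.1 hp
      exact Set.mem_iUnion₂.2 ⟨i, hi, p, hpi, rfl⟩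
    refine Set.Countable.mono this (hI.biUnion ?_)
    intro i hi
    apply Set.Subsingleton.countable
    rintro _ ⟨p, hp, rfl⟩ _ ⟨q, hq, rfl⟩
    apply heq
    exact ⟨F i, ⟨Set.subset_biUnion_of_mem hi, hF i hi, hp⟩, hq⟩
  · rintro _ ⟨p, hp, rfl⟩
    exact ⟨p, hself p hp⟩
  · rintro _ ⟨p, hp, rfl⟩ _ ⟨q, hq, rfl⟩ hne
    rw [Function.onFun, id, id, Set.disjoint_left]
    intro r hr1 hr2
    exact hne ((heq p r hr1).trans (heq q r hr2).symm)
  · rintro _ ⟨p, hp, rfl⟩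
    exact Or.inr (hW p).almost
  · apply Set.Subset.antisymm
    · rintro x ⟨_, ⟨p, hp, rfl⟩, hx⟩
      exact hsub p hx
    · intro x hx
      exact ⟨comp x, ⟨x, hx, rfl⟩, hself x hx⟩

end wc

lemma locmin_countable {E : Type*} [TopologicalSpace E] [SecondCountableTopology E] (g : E → ℝ) :
    {c : ℝ | ∃ z, IsLocalMin g z ∧ g z = c}.Countable := by
  refine Set.Countable.mono ?_ ((TopologicalSpace.countable_countableBasis E).image
    (fun B => sInf (g '' B)))
  rintro c ⟨z, hz, rfl⟩
  obtain ⟨B, hB, hzB, hBs⟩ := (TopologicalSpace.isBasis_countableBasis E).mem_nhds_iff.1 hz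
  refine ⟨B, hB, ?_⟩
  apply le_antisymm
  · exact csInf_le ⟨g z, by rintro _ ⟨w, hw, rfl⟩; exact hBs hw⟩ ⟨z, hzB, rfl⟩
  · exact le_csInf ⟨_, z, hzB, rfl⟩ (by rintro _ ⟨w, hw, rfl⟩; exact hBs hw)

/-- Danskin, first half. -/
lemma danskin_unique {E V : Type*} [NormedAddCommGroup E] [NormedSpace ℝ E]
    (G : E → V → ℝ) (U : E → ℝ) (p : E) (v : V) (D D' : E →L[ℝ] ℝ)
    (hU : HasFDerivAt U D p) (hG : HasFDerivAt (fun q => G q v) D' p)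
    (hle : ∀ᶠ q in 𝓝 p, U q ≤ G q v) (heq : U p = G p v) : D = D' := by
  have h1 := hU.sub hG
  have h2 : IsLocalMax (U - fun q => G q v) p := by
    filter_upwards [hle] with q hq
    simp only [Pi.sub_apply, heq, sub_self]
    linarith
  exact sub_eq_zero.1 (h2.hasFDerivAt_eq_zero h1)

/-- Danskin, second half. -/
lemma danskin {E V : Type*} [NormedAddCommGroup E] [NormedSpace ℝ E] [TopologicalSpace V]
    (G : E → V → ℝ) (G' : E → V → E →L[ℝ] ℝ) (U : E → ℝ) (K : Set V) (hK : IsCompact K)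
    (p : E) (D : E →L[ℝ] ℝ)
    (hG : ∀ q v, HasFDerivAt (fun q => G q v) (G' q v) q)
    (hGc : Continuous (fun x : E × V => G x.1 x.2))
    (hG'c : Continuous (fun x : E × V => G' x.1 x.2))
    (hUc : ContinuousAt U p)
    (hle : ∀ᶠ q in 𝓝 p, ∀ v ∈ K, U q ≤ G q v)
    (hex : ∀ᶠ q in 𝓝 p, ∃ v ∈ K, U q = G q v)
    (hD : ∀ v ∈ K, U p = G p v → G' p v = D) : HasFDerivAt U D p := by
  rw [hasFDerivAt_iff_isLittleO, Asymptotics.isLittleO_iff]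
  intro ε hε
  obtain ⟨v0, hv0, hv0e⟩ := hex.self_of_nhds
  have key : ∀ᶠ x : E × E in 𝓝 (p, p), ∀ v ∈ K, U x.1 = G x.1 v → ‖G' x.2 v - D‖ < ε := by
    apply hK.eventually_forall_of_forall_eventually
    intro v hv
    by_cases h : U p = G p v
    · have hc : Continuous (fun z : (E × E) × V => ‖G' z.1.2 z.2 - D‖) :=
        ((hG'c.comp (by fun_prop : Continuous (fun z : (E × E) × V => (z.1.2, z.2)))).sub
          continuous_const).norm
      have := hc.continuousAt (x := ((p, p), v)) |>.eventually_lt_const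
        (show ‖G' p v - D‖ < ε by rw [hD v hv h, sub_self, norm_zero]; exact hε)
      filter_upwards [this] with z hz _
      exact hz
    · have hc : ContinuousAt (fun z : (E × E) × V => U z.1.1 - G z.1.1 z.2) ((p, p), v) := by
        apply ContinuousAt.sub
        · exact ContinuousAt.comp (f := fun z : (E × E) × V => z.1.1) (g := U) hUc (by fun_prop)
        · exact (hGc.comp
            (by fun_prop : Continuous (fun z : (E × E) × V => (z.1.1, z.2)))).continuousAt
      have := hc.eventually_ne (show U p - G p v ≠ 0 from sub_ne_zero.2 h)
      filter_upwards [this] with z hz h2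
      exact absurd (sub_eq_zero.2 h2) hz
  have key0 : ∀ᶠ x in 𝓝 p, ‖G' x v0 - D‖ < ε := by
    have hc : Continuous (fun z : E => ‖G' z v0 - D‖) :=
        ((hG'c.comp (by fun_prop : Continuous (fun z : E => (z, v0)))).sub
          continuous_const).norm
    exact hc.continuousAt.eventually_lt_const
        (show ‖G' p v0 - D‖ < ε by rw [hD v0 hv0 hv0e, sub_self, norm_zero]; exact hε)
  obtain ⟨r, hr, hkey⟩ := Metric.eventually_nhds_iff_ball.1 key
  obtain ⟨r0, hr0, hkey0⟩ := Metric.eventually_nhds_iff_ball.1 key0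
  have mv : ∀ (ρ : ℝ) (v : V) (q : E), q ∈ Metric.ball p ρ → 
      (∀ ξ ∈ Metric.ball p ρ, ‖G' ξ v - D‖ < ε) →
      ‖G q v - G p v - D (q - p)‖ ≤ ε * ‖q - p‖ := by
    intro ρ v q hq h
    have hρ : 0 < ρ := lt_of_le_of_lt dist_nonneg hq
    exact (convex_ball p ρ).norm_image_sub_le_of_norm_hasFDerivWithin_le'
      (f := fun q => G q v) (f' := fun q => G' q v)
      (fun x _ => (hG x v).hasFDerivWithinAt) (fun x hx => (h x hx).le)
      (Metric.mem_ball_self hρ) hq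
  filter_upwards [hle, hex, Metric.ball_mem_nhds p hr, Metric.ball_mem_nhds p hr0]
    with q hq1 hq2 hq3 hq4
  obtain ⟨v, hv, hve⟩ := hq2
  have h1 := mv r v q hq3 (fun ξ hξ => hkey (q, ξ) (by
    rw [Metric.mem_ball, Prod.dist_eq]; exact max_lt hq3 hξ) v hv hve)
  have h2 := mv r0 v0 q hq4 hkey0
  have h3 := hq1 v0 hv0
  have h4 := hle.self_of_nhds v hv
  rw [Real.norm_eq_abs, abs_le] at h1 h2 ⊢
  constructor <;> linarith

end HLaux

namespace HLaux

/-- Unit normal. -/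
def nu {n : ℕ} (Dg : Euc n → Euc n) (y : Euc n) : Euc n := ‖Dg y‖⁻¹ • Dg y

/-- `y` minimizes `g` on the ball. -/
def In {n : ℕ} (g : Euc n → ℝ) (Dg : Euc n → Euc n) (y : Euc n) (t : ℝ) : Prop :=
  ∀ w, ‖w - charX Dg y t‖ ≤ t → g y ≤ g w

/-- `y` is the unique minimizer of `g` on the ball. -/
def Uq {n : ℕ} (g : Euc n → ℝ) (Dg : Euc n → Euc n) (y : Euc n) (t : ℝ) : Prop :=
  ∀ w, ‖w - charX Dg y t‖ ≤ t → w ≠ y → g y < g w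

/-- Reparametrised Hopf–Lax. -/
def ut {n : ℕ} (g : Euc n → ℝ) (x : Euc n) (t : ℝ) : ℝ :=
  sInf ((fun v => g (x + t • v)) '' Metric.closedBall (0 : Euc n) 1)

section basics
variable {n : ℕ} {g : Euc n → ℝ} {Dg : Euc n → Euc n}

lemma gcont (hg : ∀ y, HasGradientAt g (Dg y) y) : Continuous g :=
  continuous_iff_continuousAt.2 (fun y => (hg y).differentiableAt.continuousAt)

lemma charX_eq (y : Euc n) (t : ℝ) : charX Dg y t = y + t • nu Dg y := rfl

lemma norm_nu {y : Euc n} (h : Dg y ≠ 0) : ‖nu Dg y‖ = 1 := by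
  rw [nu, norm_smul, norm_inv, norm_norm, inv_mul_cancel₀ (norm_ne_zero_iff.2 h)]

lemma norm_smul_nu {y : Euc n} (h : Dg y ≠ 0) : ‖Dg y‖ • nu Dg y = Dg y := by
  rw [nu, smul_smul, mul_inv_cancel₀ (norm_ne_zero_iff.2 h), one_smul]

lemma inner_nu {y : Euc n} (h : Dg y ≠ 0) (w : Euc n) : ⟪Dg y, w⟫_ℝ = ‖Dg y‖ * ⟪nu Dg y, w⟫_ℝ := by
  conv_lhs => rw [← norm_smul_nu h]
  rw [real_inner_smul_left]

lemma nu_cont (hDg : Continuous Dg) {y : Euc n} (h : Dg y ≠ 0) : ContinuousAt (nu Dg) y :=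
  (hDg.norm.continuousAt.inv₀ (norm_ne_zero_iff.2 h)).smul hDg.continuousAt

lemma ball_param {x w : Euc n} {t : ℝ} (ht : 0 ≤ t) (h : ‖w - x‖ ≤ t) :
    ∃ v ∈ Metric.closedBall (0 : Euc n) 1, w = x + t • v := by
  rcases ht.eq_or_lt with rfl | ht
  · refine ⟨0, by simp, ?_⟩
    have : w - x = 0 := norm_le_zero_iff.1 h
    rw [smul_zero, add_zero]
    exact sub_eq_zero.1 this
  · refine ⟨t⁻¹ • (w - x), ?_, ?_⟩
    · rw [mem_closedBall_zero_iff, norm_smul, norm_inv, Real.norm_of_nonneg ht.le,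
        inv_mul_le_iff₀ ht, mul_one]
      exact h
    · rw [smul_smul, mul_inv_cancel₀ ht.ne', one_smul]; abel

lemma param_ball {x v : Euc n} {t : ℝ} (ht : 0 ≤ t) (h : v ∈ Metric.closedBall (0 : Euc n) 1) :
    ‖(x + t • v) - x‖ ≤ t := by
  rw [add_sub_cancel_left, norm_smul, Real.norm_of_nonneg ht]
  exact mul_le_of_le_one_right ht (mem_closedBall_zero_iff.1 h)

lemma HLu_eq (x : Euc n) {t : ℝ} (ht : 0 ≤ t) : HLu g x t = ut g x t := by
  unfold HLu ut
  congr 1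
  ext c
  constructor
  · rintro ⟨w, hw, rfl⟩
    obtain ⟨v, hv, rfl⟩ := ball_param ht (mem_closedBall_iff_norm.1 hw)
    exact ⟨v, hv, rfl⟩
  · rintro ⟨v, hv, rfl⟩
    exact ⟨_, mem_closedBall_iff_norm.2 (param_ball ht hv), rfl⟩

lemma ut_cont (hc : Continuous g) : Continuous (fun q : Euc n × ℝ => ut g q.1 q.2) := by
  have := (isCompact_closedBall (0 : Euc n) 1).continuous_sInf
    (f := fun (q : Euc n × ℝ) v => g (q.1 + q.2 • v)) (by
      unfold Function.HasUncurry.uncurry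
      simp only [Function.hasUncurryInduction]
      fun_prop)
  exact this

lemma HLu_le (hc : Continuous g) {x w : Euc n} {t : ℝ} (h : ‖w - x‖ ≤ t) : HLu g x t ≤ g w := by
  refine csInf_le ?_ (Set.mem_image_of_mem g (mem_closedBall_iff_norm.2 h))
  exact ((isCompact_closedBall x t).image hc).bddBelow

lemma HLu_ex (hc : Continuous g) (x : Euc n) {t : ℝ} (ht : 0 ≤ t) : (HLL g x t).Nonempty := by
  obtain ⟨y, hy, hy'⟩ := ((isCompact_closedBall x t).image hc).sInf_mem
    (((Metric.nonempty_closedBall (x := x)).2 ht).image g)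
  exact ⟨y, mem_closedBall_iff_norm.1 hy, hy'⟩

lemma mem_HLL (hc : Continuous g) {x y : Euc n} {t : ℝ} :
    y ∈ HLL g x t ↔ ‖y - x‖ ≤ t ∧ ∀ w, ‖w - x‖ ≤ t → g y ≤ g w := by
  constructor
  · rintro ⟨h1, h2⟩
    exact ⟨h1, fun w hw => h2 ▸ HLu_le hc hw⟩
  · rintro ⟨h1, h2⟩
    refine ⟨h1, le_antisymm ?_ (HLu_le hc h1)⟩
    obtain ⟨z, hz1, hz2⟩ := HLu_ex hc x ((norm_nonneg _).trans h1)
    rw [← hz2]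
    exact h2 z hz1

lemma eq_charX_of {x y v : Euc n} {t : ℝ} (ht : 0 ≤ t) (hv : ‖v‖ = 1)
    (h1 : ‖x - y‖ ≤ t) (h2 : t ≤ ⟪v, x - y⟫_ℝ) : x = y + t • v := by
  have h : ‖(x - y) - t • v‖ ^ 2 ≤ 0 := by
    rw [norm_sub_sq_real, real_inner_smul_right, norm_smul, hv, Real.norm_of_nonneg ht,
      real_inner_comm]
    have : ‖x - y‖ ^ 2 ≤ t ^ 2 := by gcongr
    nlinarith
  have h' : (x - y) - t • v = 0 := by
    have := sq_nonneg ‖(x - y) - t • v‖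
    exact norm_eq_zero.1 (pow_eq_zero_iff (two_ne_zero) |>.1 (le_antisymm h this))
  rw [sub_sub, sub_eq_zero] at h'
  exact h'

lemma opt (hg : ∀ y, HasGradientAt g (Dg y) y) {x y : Euc n} {t : ℝ} (ht : 0 ≤ t) (hy : Dg y ≠ 0)
    (h1 : ‖y - x‖ ≤ t) (h2 : ∀ w, ‖w - x‖ ≤ t → g y ≤ g w) : x = charX Dg y t := by
  have hmin : IsLocalMinOn g (Metric.closedBall x t) y := by
    apply IsMinOn.localize
    intro w hw
    exact h2 w (mem_closedBall_iff_norm.1 hw)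
  have hw : x - t • nu Dg y ∈ Metric.closedBall x t := by
    rw [mem_closedBall_iff_norm, sub_sub_cancel_left, norm_neg, norm_smul, norm_nu hy,
      Real.norm_of_nonneg ht, mul_one]
  have h3 := hmin.hasFDerivWithinAt_nonneg (hg y).hasFDerivAt.hasFDerivWithinAt
    (sub_mem_posTangentConeAt_of_segment_subset
      ((convex_closedBall x t).segment_subset (mem_closedBall_iff_norm.2 h1) hw))
  rw [InnerProductSpace.toDual_apply_apply, inner_nu hy] at h3
  have h4 : 0 ≤ ⟪nu Dg y, x - t • nu Dg y - y⟫_ℝ :=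
    nonneg_of_mul_nonneg_right h3 (norm_pos_iff.2 hy)
  rw [sub_right_comm, inner_sub_right, real_inner_smul_right, real_inner_self_eq_norm_sq,
    norm_nu hy] at h4
  apply eq_charX_of ht (norm_nu hy) (by rwa [norm_sub_rev])
  linarith

lemma self_mem {y : Euc n} {t : ℝ} (ht : 0 ≤ t) (hy : Dg y ≠ 0) : ‖y - charX Dg y t‖ ≤ t := by
  rw [charX_eq, sub_add_cancel_left, norm_neg, norm_smul, norm_nu hy, Real.norm_of_nonneg ht,
    mul_one]

lemma ball_iff {y w : Euc n} {t : ℝ} (ht : 0 ≤ t) (hy : Dg y ≠ 0) :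
    ‖w - charX Dg y t‖ ≤ t ↔ ‖w - y‖ ^ 2 ≤ 2 * t * ⟪nu Dg y, w - y⟫_ℝ := by
  rw [← sq_le_sq₀ (norm_nonneg _) ht, charX_eq, ← sub_sub, norm_sub_sq_real, real_inner_smul_right,
    norm_smul, norm_nu hy, Real.norm_of_nonneg ht, real_inner_comm]
  constructor <;> intro h <;> linarith

lemma ball_mono {y w : Euc n} {s t : ℝ} (hs : 0 ≤ s) (hst : s ≤ t) (hy : Dg y ≠ 0)
    (h : ‖w - charX Dg y s‖ ≤ s) : ‖w - charX Dg y t‖ ≤ t := by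
  rw [ball_iff hs hy] at h
  rw [ball_iff (hs.trans hst) hy]
  rcases hs.eq_or_lt with rfl | hs
  · have : w - y = 0 := by
      rw [mul_zero, zero_mul] at h
      exact norm_eq_zero.1 (pow_eq_zero_iff two_ne_zero |>.1 (le_antisymm h (sq_nonneg _)))
    simp [this]
  · have h0 : 0 ≤ ⟪nu Dg y, w - y⟫_ℝ := by
      have := (sq_nonneg ‖w - y‖).trans h
      exact nonneg_of_mul_nonneg_right this (by positivity)
    nlinarith

lemma In.mono {y : Euc n} {s t : ℝ} (hs : 0 ≤ s) (hst : s ≤ t) (hy : Dg y ≠ 0)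
    (h : In g Dg y t) : In g Dg y s := fun w hw => h w (ball_mono hs hst hy hw)

lemma Uq.mono {y : Euc n} {s t : ℝ} (hs : 0 ≤ s) (hst : s ≤ t) (hy : Dg y ≠ 0)
    (h : Uq g Dg y t) : Uq g Dg y s := fun w hw => h w (ball_mono hs hst hy hw)

lemma Uq.in {y : Euc n} {t : ℝ} (h : Uq g Dg y t) : In g Dg y t := by
  intro w hw
  by_cases hwy : w = y
  · rw [hwy]
  · exact (h w hw hwy).le

lemma In_zero (y : Euc n) : In g Dg y 0 := by
  intro w hw
  have : w - charX Dg y 0 = 0 := norm_le_zero_iff.1 hw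
  rw [charX_eq, zero_smul, add_zero, sub_eq_zero] at this
  rw [this]

lemma inner_pos_of_ball {y w : Euc n} {t : ℝ} (ht : 0 ≤ t) (hy : Dg y ≠ 0) (hw : w ≠ y)
    (h : ‖w - charX Dg y t‖ ≤ t) : 0 < ⟪Dg y, w - y⟫_ℝ := by
  rw [ball_iff ht hy] at h
  rw [inner_nu hy]
  have h1 : 0 < ‖w - y‖ ^ 2 := by
    have := norm_pos_iff.2 (sub_ne_zero.2 hw)
    positivity
  have h2 : 0 < 2 * t * ⟪nu Dg y, w - y⟫_ℝ := h1.trans_le h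
  have h3 : 0 < ⟪nu Dg y, w - y⟫_ℝ := pos_of_mul_pos_right h2 (by positivity)
  have := norm_pos_iff.2 hy
  positivity

lemma ball_of_inner_pos {y z : Euc n} (hy : Dg y ≠ 0) (h : 0 < ⟪Dg y, z - y⟫_ℝ) :
    ∃ t : ℝ, 0 < t ∧ ‖z - charX Dg y t‖ < t := by
  rw [inner_nu hy] at h
  have h3 : 0 < ⟪nu Dg y, z - y⟫_ℝ := pos_of_mul_pos_right h (norm_nonneg _)
  set a := ⟪nu Dg y, z - y⟫_ℝ with ha
  refine ⟨(‖z - y‖ ^ 2 + 1) / (2 * a), by positivity, ?_⟩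
  set t := (‖z - y‖ ^ 2 + 1) / (2 * a) with ht
  have htp : 0 < t := by positivity
  have hta : 2 * t * a = ‖z - y‖ ^ 2 + 1 := by rw [ht]; field_simp
  rw [← sq_lt_sq₀ (norm_nonneg _) htp.le, charX_eq, ← sub_sub, norm_sub_sq_real,
    real_inner_smul_right,
    norm_smul, norm_nu hy, Real.norm_of_nonneg htp.le, real_inner_comm, ← ha]
  linarith

lemma charX_cont (hDg : Continuous Dg) {y : Euc n} (h : Dg y ≠ 0) (t : ℝ) :
    ContinuousAt (fun q : Euc n × ℝ => charX Dg q.1 q.2) (y, t) := by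
  have h1 : ContinuousAt (fun q : Euc n × ℝ => nu Dg q.1) (y, t) :=
    ContinuousAt.comp (f := fun q : Euc n × ℝ => q.1) (g := nu Dg) (nu_cont hDg h) (by fun_prop)
  exact continuous_fst.continuousAt.add (continuous_snd.continuousAt.smul h1)

lemma In_closed (hg : ∀ y, HasGradientAt g (Dg y) y) (hDg : Continuous Dg) {ι : Type*}
    {F : Filter ι} {f : ι → Euc n} {τ : ι → ℝ} {y : Euc n} {t : ℝ} (hy : Dg y ≠ 0) (ht : 0 ≤ t)
    (hf : Tendsto f F (𝓝 y)) (hτ : Tendsto τ F (𝓝 t))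
    (h : ∃ᶠ i in F, 0 ≤ τ i ∧ In g Dg (f i) (τ i)) : In g Dg y t := by
  intro w hw
  obtain ⟨v, hv, rfl⟩ := ball_param ht hw
  have hc := gcont hg
  have h1 : Tendsto (fun i => charX Dg (f i) (τ i)) F (𝓝 (charX Dg y t)) :=
    (charX_cont hDg hy t).tendsto.comp (hf.prodMk_nhds hτ)
  have h2 : Tendsto (fun i => (g (f i), g (charX Dg (f i) (τ i) + τ i • v))) F
      (𝓝 (g y, g (charX Dg y t + t • v))) :=
    ((hc.tendsto _).comp hf).prodMk_nhds ((hc.tendsto _).comp (h1.add (hτ.smul_const v)))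
  have h3 : IsClosed {p : ℝ × ℝ | p.1 ≤ p.2} := isClosed_le continuous_fst continuous_snd
  refine h3.mem_of_frequently_of_tendsto (h.mono ?_) h2
  rintro i ⟨hi1, hi2⟩
  exact hi2 _ (param_ball hi1 hv)

lemma usc (hc : Continuous g) {x : Euc n} {t : ℝ} (ht : 0 ≤ t) {O : Set (Euc n)} (hO : IsOpen O)
    (h : HLL g x t ⊆ O) : ∀ᶠ x' in 𝓝 x, HLL g x' t ⊆ O := by
  have key : ∀ᶠ x' in 𝓝 x, ∀ v ∈ Metric.closedBall (0 : Euc n) 1,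
      ut g x' t = g (x' + t • v) → x' + t • v ∈ O := by
    apply (isCompact_closedBall (0 : Euc n) 1).eventually_forall_of_forall_eventually
    intro v hv
    by_cases h1 : ut g x t = g (x + t • v)
    · have h2 : x + t • v ∈ O := h ⟨param_ball ht hv, by rw [HLu_eq x ht, h1]⟩
      have hcc : Continuous (fun z : Euc n × Euc n => z.1 + t • z.2) := by fun_prop
      filter_upwards [hcc.continuousAt.preimage_mem_nhds (hO.mem_nhds h2)] with z hz _
      exact hz
    · have hcc : Continuous (fun z : Euc n × Euc n => ut g z.1 t - g (z.1 + t • z.2)) :=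
        ((ut_cont hc).comp (by fun_prop : Continuous (fun z : Euc n × Euc n => (z.1, t)))).sub
          (by fun_prop)
      filter_upwards [hcc.continuousAt.eventually_ne (x := (x, v)) (sub_ne_zero.2 h1)] with z hz h3
      exact absurd (sub_eq_zero.2 h3) hz
  filter_upwards [key] with x' hx' y hy
  obtain ⟨v, hv, rfl⟩ := ball_param ht hy.1
  exact hx' v hv (by rw [← HLu_eq x' ht]; exact hy.2.symm)

lemma mono_dir (hg : ∀ y, HasGradientAt g (Dg y) y) {S : Set (Euc n)} (hS : Convex ℝ S)
    {a w : Euc n} (h : ∀ p ∈ S, 0 < ⟪Dg p, w⟫_ℝ) {s : ℝ} (hs : 0 < s) (ha : a ∈ S)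
    (hb : a + s • w ∈ S) : g a < g (a + s • w) := by
  have hd : ∀ r : ℝ, HasDerivAt (fun r : ℝ => g (a + r • w)) ⟪Dg (a + r • w), w⟫_ℝ r := by
    intro r
    have h1 : HasDerivAt (fun r : ℝ => a + r • w) w r := by
      simpa using ((hasDerivAt_id r).smul_const w).const_add a
    have := (hg (a + r • w)).hasFDerivAt.comp_hasDerivAt r h1
    rw [InnerProductSpace.toDual_apply_apply] at this
    exact this
  obtain ⟨c, hc, hce⟩ := exists_hasDerivAt_eq_slope (fun r : ℝ => g (a + r • w)) _ hs
    (fun r _ => (hd r).continuousAt.continuousWithinAt) (fun r _ => hd r)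
  have hcS : a + c • w ∈ S := by
    have := hS.add_smul_mem ha hb (t := c / s) ⟨by have := hc.1; positivity, by
      rw [div_le_one hs]; exact hc.2.le⟩
    rwa [smul_smul, div_mul_cancel₀ _ hs.ne'] at this
  have h1 := h _ hcS
  rw [hce] at h1
  simp only [zero_smul, add_zero, sub_zero] at h1
  have := (div_pos_iff_of_pos_right hs).1 h1
  linarith

end basics

end HLaux

namespace HLaux

/-- Derivative in the parameters. -/
def Gd {n : ℕ} (Dg : Euc n → Euc n) (q : Euc n × ℝ) (v : Euc n) : (Euc n × ℝ) →L[ℝ] ℝ :=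
  (innerSL ℝ (Dg (q.1 + q.2 • v))).comp
    (ContinuousLinearMap.fst ℝ (Euc n) ℝ + (ContinuousLinearMap.snd ℝ (Euc n) ℝ).smulRight v)

section diff
variable {n : ℕ} {g : Euc n → ℝ} {Dg : Euc n → Euc n}

lemma Gd_apply (q : Euc n × ℝ) (v : Euc n) (h : Euc n × ℝ) :
    Gd Dg q v h = ⟪Dg (q.1 + q.2 • v), h.1 + h.2 • v⟫_ℝ := by
  simp [Gd, inner_add_right, real_inner_smul_right]

lemma Gd_hasFDeriv (hg : ∀ y, HasGradientAt g (Dg y) y) (q : Euc n × ℝ) (v : Euc n) :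
    HasFDerivAt (fun q : Euc n × ℝ => g (q.1 + q.2 • v)) (Gd Dg q v) q := by
  have h1 : HasFDerivAt (fun q : Euc n × ℝ => q.1 + q.2 • v)
    (ContinuousLinearMap.fst ℝ (Euc n) ℝ + (ContinuousLinearMap.snd ℝ (Euc n) ℝ).smulRight v) q :=
    hasFDerivAt_fst.add (hasFDerivAt_snd.smul_const v)
  exact (hg (q.1 + q.2 • v)).hasFDerivAt.comp q h1

lemma Gd_cont (hDg : Continuous Dg) :
    Continuous (fun x : (Euc n × ℝ) × Euc n => Gd Dg x.1 x.2) := by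
  unfold Gd
  apply Continuous.clm_comp
  · fun_prop
  · apply Continuous.add continuous_const
    have : ∀ v : Euc n, (ContinuousLinearMap.snd ℝ (Euc n) ℝ).smulRight v =
      ContinuousLinearMap.smulRightL ℝ (Euc n × ℝ) (Euc n) (ContinuousLinearMap.snd ℝ (Euc n) ℝ) v :=
      fun v => rfl
    simp only [this]
    fun_prop

lemma pos_ev {t : ℝ} (ht : 0 < t) (x : Euc n) : ∀ᶠ q : Euc n × ℝ in 𝓝 (x, t), 0 < q.2 :=
  continuous_snd.continuousAt.eventually (lt_mem_nhds ht)

lemma HLu_ev (t : ℝ) (ht : 0 < t) (x : Euc n) :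
    (fun q : Euc n × ℝ => HLu g q.1 q.2) =ᶠ[𝓝 (x, t)] (fun q => ut g q.1 q.2) := by
  filter_upwards [pos_ev ht x] with q hq
  exact HLu_eq q.1 hq.le

lemma not_diff (hg : ∀ y, HasGradientAt g (Dg y) y) {x : Euc n} {t : ℝ} (ht : 0 < t)
    {y z : Euc n} (hy : y ∈ HLL g x t) (hz : z ∈ HLL g x t) (hyz : y ≠ z) (hD : Dg y ≠ 0) :
    ¬ DifferentiableAt ℝ (fun q : Euc n × ℝ => HLu g q.1 q.2) (x, t) := by
  intro hd
  have hc := gcont hg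
  have key : ∀ a ∈ HLL g x t, ∀ h : Euc n,
      fderiv ℝ (fun q : Euc n × ℝ => HLu g q.1 q.2) (x, t) (h, 0) = ⟪Dg a, h⟫_ℝ := by
    intro a ha h
    obtain ⟨v, hv, rfl⟩ := ball_param ht.le ha.1
    have := danskin_unique (fun (q : Euc n × ℝ) v => g (q.1 + q.2 • v))
      (fun q : Euc n × ℝ => HLu g q.1 q.2) (x, t) v _ _ hd.hasFDerivAt (Gd_hasFDeriv hg (x, t) v)
      (by
        filter_upwards [pos_ev ht x] with q hq
        exact HLu_le hc (param_ball (le_of_lt hq) hv)) ha.2.symm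
    rw [this, Gd_apply]
    simp
  have hDe : Dg y = Dg z := by
    apply ext_inner_right ℝ
    intro h
    rw [← key y hy h, ← key z hz h]
  have h1 := opt hg ht.le hD hy.1 ((mem_HLL hc).1 hy).2
  have h2 := opt hg ht.le (hDe ▸ hD) hz.1 ((mem_HLL hc).1 hz).2
  rw [h1, charX, charX, hDe] at h2
  exact hyz (add_right_cancel h2)

lemma is_diff (hg : ∀ y, HasGradientAt g (Dg y) y) (hDg : Continuous Dg) {x : Euc n} {t : ℝ}
    (ht : 0 < t) (q : Euc n) (hq : ∀ y ∈ HLL g x t, Dg y = q) :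
    DifferentiableAt ℝ (fun q : Euc n × ℝ => HLu g q.1 q.2) (x, t) := by
  have hc := gcont hg
  have hmin : ∀ q : Euc n × ℝ, 0 < q.2 → ∀ v ∈ Metric.closedBall (0 : Euc n) 1,
      HLu g q.1 q.2 ≤ g (q.1 + q.2 • v) := fun q h v hv => HLu_le hc (param_ball h.le hv)
  obtain ⟨y0, hy0⟩ := HLu_ex hc x ht.le
  obtain ⟨v0, hv0, rfl⟩ := ball_param ht.le hy0.1
  have hpos : ∀ᶠ q : Euc n × ℝ in 𝓝 (x, t), 0 < q.2 :=
    pos_ev ht x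
  refine HasFDerivAt.differentiableAt (f' := Gd Dg (x, t) v0)
    (danskin (fun (q : Euc n × ℝ) v => g (q.1 + q.2 • v)) (Gd Dg)
    (fun q : Euc n × ℝ => HLu g q.1 q.2) (Metric.closedBall 0 1) (isCompact_closedBall 0 1) (x, t) _
    (Gd_hasFDeriv hg) (by fun_prop) (Gd_cont hDg)
    ((ut_cont hc).continuousAt.congr (HLu_ev t ht x).symm) ?_ ?_ ?_)
  · filter_upwards [hpos] with q hq
    exact hmin q hq
  · filter_upwards [hpos] with q hq
    obtain ⟨y, hy⟩ := HLu_ex hc q.1 hq.le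
    obtain ⟨v, hv, rfl⟩ := ball_param hq.le hy.1
    exact ⟨v, hv, hy.2.symm⟩
  · intro v hv hve
    have hvL : x + t • v ∈ HLL g x t := ⟨param_ball ht.le hv, hve.symm⟩
    by_cases h0 : q = 0
    · ext h
      all_goals simp [Gd_apply, hq _ hvL, hq _ hy0, h0]
    · have h1 := opt hg ht.le (by rw [hq _ hvL]; exact h0) hvL.1 ((mem_HLL hc).1 hvL).2
      have h2 := opt hg ht.le (by rw [hq _ hy0]; exact h0) hy0.1 ((mem_HLL hc).1 hy0).2
      rw [charX, hq _ hvL] at h1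
      rw [charX, hq _ hy0] at h2
      have h3 := add_left_cancel (add_right_cancel (h1.symm.trans h2))
      rw [smul_right_injective _ ht.ne' h3]

end diff

section TMchar
variable {n : ℕ} {g : Euc n → ℝ} {Dg : Euc n → Euc n}

/-- Termination times. -/
def J {n : ℕ} (g : Euc n → ℝ) (Dg : Euc n → Euc n) (y : Euc n) : Set ℝ :=
  {t | 0 ≤ t ∧ In g Dg y t ∧ ∀ s > t, ¬ Uq g Dg y s}

lemma HLL_singleton_iff (hg : ∀ y, HasGradientAt g (Dg y) y) {y : Euc n} {t : ℝ} (ht : 0 ≤ t)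
    (hy : Dg y ≠ 0) : HLL g (charX Dg y t) t = {y} ↔ Uq g Dg y t := by
  have hc := gcont hg
  constructor
  · intro h w hw hwy
    have h1 : y ∈ HLL g (charX Dg y t) t := by rw [h]; rfl
    have h2 := ((mem_HLL hc).1 h1).2
    refine lt_of_le_of_ne (h2 w hw) (fun he => hwy ?_)
    have : w ∈ HLL g (charX Dg y t) t := ⟨hw, by rw [← he]; exact h1.2⟩
    rw [h] at this
    exact this
  · intro h
    ext w
    rw [mem_HLL hc, Set.mem_singleton_iff]
    constructor
    · rintro ⟨h1, h2⟩
      by_contra hwy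
      exact absurd (h w h1 hwy) (not_lt.2 (h2 y (self_mem ht hy)))
    · rintro rfl
      exact ⟨self_mem ht hy, h.in⟩

lemma mem_HLL_iff_In (hg : ∀ y, HasGradientAt g (Dg y) y) {y : Euc n} {t : ℝ} (ht : 0 ≤ t)
    (hy : Dg y ≠ 0) : y ∈ HLL g (charX Dg y t) t ↔ In g Dg y t := by
  rw [mem_HLL (gcont hg)]
  exact ⟨fun h => h.2, fun h => ⟨self_mem ht hy, h⟩⟩

lemma mem_TM (hg : ∀ y, HasGradientAt g (Dg y) y) (hDg : Continuous Dg) (p : Euc n × ℝ) :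
    p ∈ TM g Dg ↔ ∃ y t, Dg y ≠ 0 ∧ 0 < t ∧ t ∈ J g Dg y ∧ p = (charX Dg y t, t) := by
  have hb : ∀ y t, Dg y ≠ 0 → 0 < t → (tbar g Dg y ≤ ENNReal.ofReal t ↔
      ∀ s > t, ¬ Uq g Dg y s) := by
    intro y t hy ht
    rw [tbar, sSup_le_iff]
    constructor
    · intro h s hs hu
      have := h _ ⟨s, ⟨ht.trans hs, (HLL_singleton_iff hg (ht.trans hs).le hy).2 hu⟩, rfl⟩
      rw [ENNReal.ofReal_le_ofReal_iff ht.le] at this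
      linarith
    · rintro h _ ⟨s, ⟨hs0, hs⟩, rfl⟩
      apply ENNReal.ofReal_le_ofReal
      by_contra hst
      exact h s (not_le.1 hst) ((HLL_singleton_iff hg hs0.le hy).1 hs)
  have ha : ∀ y t, Dg y ≠ 0 → 0 < t → (ENNReal.ofReal t ≤ tsnd g Dg y ↔ In g Dg y t) := by
    intro y t hy ht
    rw [tsnd, le_sInf_iff]
    constructor
    · intro h
      have h1 : ∀ s, 0 < s → s < t → In g Dg y s := by
        intro s hs0 hst
        by_contra hn
        have := h _ ⟨s, ⟨hs0, fun hm => hn ((mem_HLL_iff_In hg hs0.le hy).1 hm)⟩, rfl⟩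
        rw [ENNReal.ofReal_le_ofReal_iff hs0.le] at this
        linarith
      refine In_closed hg hDg (F := 𝓝[<] t) (f := fun _ => y) (τ := id) hy ht.le tendsto_const_nhds
        (tendsto_id.mono_left nhdsWithin_le_nhds) (Eventually.frequently ?_)
      filter_upwards [self_mem_nhdsWithin, nhdsWithin_le_nhds (lt_mem_nhds ht)] with s hs1 hs2
      exact ⟨le_of_lt hs2, h1 s hs2 hs1⟩
    · rintro h _ ⟨s, ⟨hs0, hs⟩, rfl⟩
      apply ENNReal.ofReal_le_ofReal
      by_contra hst
      exact hs ((mem_HLL_iff_In hg hs0.le hy).2 (h.mono hs0.le (not_le.1 hst).le hy))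
  constructor
  · rintro ⟨y, t, hy, _, ht, h1, h2, rfl⟩
    exact ⟨y, t, hy, ht, ⟨ht.le, (ha y t hy ht).1 h2, (hb y t hy ht).1 h1⟩, rfl⟩
  · rintro ⟨y, t, hy, ht, ⟨_, h1, h2⟩, rfl⟩
    have h3 := (hb y t hy ht).2 h2
    exact ⟨y, t, hy, h3.trans_lt ENNReal.ofReal_lt_top, ht, h3, (ha y t hy ht).2 h1, rfl⟩

/-- Two minimizers give a termination time. -/
lemma J_of_two (hg : ∀ y, HasGradientAt g (Dg y) y) {x y z : Euc n} {t : ℝ} (ht : 0 ≤ t)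
    (hD : Dg y ≠ 0) (hy : y ∈ HLL g x t) (hz : z ∈ HLL g x t) (hyz : z ≠ y) :
    t ∈ J g Dg y ∧ x = charX Dg y t := by
  have hc := gcont hg
  have h1 := opt hg ht hD hy.1 ((mem_HLL hc).1 hy).2
  refine ⟨⟨ht, ?_, ?_⟩, h1⟩
  · rw [h1] at hy
    exact ((mem_HLL hc).1 hy).2
  · intro s hs hu
    rw [h1] at hz hy
    have := hu z (ball_mono ht (le_of_lt hs) hD hz.1) hyz
    rw [hz.2, hy.2] at this
    exact lt_irrefl _ this

lemma S_eq (hg : ∀ y, HasGradientAt g (Dg y) y) (hDg : Continuous Dg) :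
    SigmaSet g ∪ T1 g Dg = {p | ∃ y t, Dg y ≠ 0 ∧ 0 < t ∧ t ∈ J g Dg y ∧ p = (charX Dg y t, t)} := by
  have hc := gcont hg
  ext p
  rw [Set.mem_ofPred_eq, ← mem_TM hg hDg]
  constructor
  · rintro (⟨ht, hnd⟩ | h)
    · obtain ⟨x, t⟩ := p
      simp only at ht
      by_contra hT
      apply hnd
      by_cases h0 : ∀ y ∈ HLL g x t, Dg y = 0
      · exact is_diff hg hDg ht 0 h0
      · push Not at h0
        obtain ⟨y, hy, hy0⟩ := h0
        apply is_diff hg hDg ht (Dg y)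
        intro z hz
        by_cases hzy : z = y
        · rw [hzy]
        · obtain ⟨h1, h2⟩ := J_of_two hg ht.le hy0 hy hz hzy
          exact absurd ((mem_TM hg hDg _).2 ⟨y, t, hy0, ht, h1, by rw [h2]⟩) hT
    · exact h.1
  · intro h
    by_cases hs : ∃ y, HLL g p.1 p.2 = {y}
    · exact Or.inr ⟨h, hs⟩
    · left
      obtain ⟨y, t, hy, ht, hJ, rfl⟩ := (mem_TM hg hDg p).1 h
      refine ⟨ht, ?_⟩
      have hyL := (mem_HLL_iff_In hg ht.le hy).2 hJ.2.1
      have : ∃ z ∈ HLL g (charX Dg y t) t, z ≠ y := by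
        by_contra hn
        push Not at hn
        exact hs ⟨y, Set.eq_singleton_iff_unique_mem.2 ⟨hyL, hn⟩⟩
      obtain ⟨z, hz, hzy⟩ := this
      exact not_diff hg ht hyL hz (Ne.symm hzy) hy

end TMchar
end HLaux

namespace HLaux

section lemA
variable {n : ℕ} {g : Euc n → ℝ} {Dg : Euc n → Euc n}

lemma HLu_cont_x (hc : Continuous g) {t : ℝ} (ht : 0 ≤ t) : Continuous (fun x => HLu g x t) := by
  have h : (fun x => HLu g x t) = fun x => ut g x t := by
    ext x; exact HLu_eq x ht
  rw [h]
  exact (ut_cont hc).comp (by fun_prop : Continuous (fun z : Euc n => (z, t)))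

lemma ball_inner (hDg : Continuous Dg) {y : Euc n} (hy : Dg y ≠ 0) :
    ∃ R > 0, ∀ a ∈ Metric.ball y R, ∀ b ∈ Metric.ball y R, 0 < ⟪Dg a, Dg b⟫_ℝ := by
  have hcc : Continuous (fun q : Euc n × Euc n => ⟪Dg q.1, Dg q.2⟫_ℝ) := by fun_prop
  have h0 : 0 < ⟪Dg y, Dg y⟫_ℝ := real_inner_self_pos.2 hy
  obtain ⟨R, hR, h⟩ := Metric.eventually_nhds_iff_ball.1
    ((hcc.continuousAt (x := (y, y))).eventually (lt_mem_nhds h0))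
  refine ⟨R, hR, fun a ha b hb => h (a, b) ?_⟩
  rw [Metric.mem_ball, Prod.dist_eq]
  exact max_lt ha hb

lemma claimB (hg : ∀ y, HasGradientAt g (Dg y) y) {y : Euc n}
    (hy : Dg y ≠ 0) {t : ℝ} (ht : 0 < t) {η : ℝ} (hη : 0 < η) :
    ∃ σ > 0, ∀ x y' : Euc n, dist y' y < σ → ‖x - y'‖ ≤ t + σ → g y - σ ≤ HLu g x t →
      dist x (charX Dg y t) < η := by
  have hc := gcont hg
  have hu := HLu_cont_x hc ht.le
  set K := Metric.closedBall y (t + 2) \ Metric.ball (charX Dg y t) η with hK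
  have hKc : IsCompact K := (isCompact_closedBall y (t + 2)).diff Metric.isOpen_ball
  have hφ : Continuous (fun x => max (‖x - y‖ - t) (g y - HLu g x t)) := by fun_prop
  have hm : ∃ m > 0, ∀ x ∈ K, m ≤ max (‖x - y‖ - t) (g y - HLu g x t) := by
    rcases K.eq_empty_or_nonempty with h | h
    · exact ⟨1, one_pos, by simp [h]⟩
    · obtain ⟨x, hx, hmin⟩ := hKc.exists_isMinOn h hφ.continuousOn
      refine ⟨_, ?_, fun x hx => hmin hx⟩
      by_contra hn
      rw [not_lt, max_le_iff] at hn
      have h1 : ‖y - x‖ ≤ t := by rw [norm_sub_rev]; linarith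
      have h2 := opt hg ht.le hy h1 (fun w hw => by
        have := HLu_le hc hw
        linarith)
      apply hx.2
      rw [← h2]
      exact Metric.mem_ball_self hη
  obtain ⟨m, hm, hmK⟩ := hm
  refine ⟨min (m / 3) 1, by positivity, ?_⟩
  intro x y' h1 h2 h3
  have hs1 := min_le_left (m / 3) 1
  have hs2 := min_le_right (m / 3) 1
  have h4 : ‖x - y‖ ≤ t + 2 * min (m / 3) 1 := by
    rw [dist_eq_norm] at h1
    have : ‖x - y‖ ≤ ‖x - y'‖ + ‖y' - y‖ := norm_sub_le_norm_sub_add_norm_sub _ _ _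
    linarith
  by_contra hn
  have hxK : x ∈ K := ⟨mem_closedBall_iff_norm.2 (by linarith), fun h => hn h⟩
  have := hmK x hxK
  rw [le_max_iff] at this
  rcases this with h | h <;> linarith

lemma lemA (hg : ∀ y, HasGradientAt g (Dg y) y) (hDg : Continuous Dg) {y : Euc n}
    (hy : Dg y ≠ 0) {t : ℝ} (ht : 0 < t) (hU : Uq g Dg y t) {c : ℝ}
    (hcl : y ∈ closure {y' | ¬ In g Dg y' t ∧ c ≤ g y'}) {ε : ℝ} (hε : 0 < ε) :
    ∃ x z z', dist x (charX Dg y t) < ε ∧ dist z y < ε ∧ z ∈ HLL g x t ∧ z' ∈ HLL g x t ∧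
      z' ≠ z ∧ c ≤ g z := by
  by_contra H
  have hc := gcont hg
  have hu := HLu_cont_x hc ht.le
  set x0 := charX Dg y t with hx0
  have hL0 : HLL g x0 t = {y} := (HLL_singleton_iff hg ht.le hy).2 hU
  obtain ⟨R0, hR0, hin0⟩ := ball_inner hDg hy
  set R := min R0 ε with hRdef
  have hR : 0 < R := by positivity
  have hRε : R ≤ ε := min_le_right _ _
  have hin : ∀ a ∈ Metric.ball y R, ∀ b ∈ Metric.ball y R, 0 < ⟪Dg a, Dg b⟫_ℝ := fun a ha b hb =>
    hin0 a (Metric.ball_subset_ball (min_le_left _ _) ha) b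
      (Metric.ball_subset_ball (min_le_left _ _) hb)
  have hyR : y ∈ Metric.ball y R := Metric.mem_ball_self hR
  have hne : ∀ a ∈ Metric.ball y R, Dg a ≠ 0 := by
    intro a ha h0
    have := hin a ha y hyR
    rw [h0, inner_zero_left] at this
    exact lt_irrefl _ this
  have hinnu : ∀ a ∈ Metric.ball y R, ∀ b ∈ Metric.ball y R, 0 < ⟪Dg a, nu Dg b⟫_ℝ := by
    intro a ha b hb
    rw [nu, real_inner_smul_right]
    have := hin a ha b hb
    have := norm_pos_iff.2 (hne b hb)
    positivity
  have hev := usc hc ht.le (Metric.isOpen_ball (x := y) (ε := R / 2)) (x := x0) (by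
    rw [hL0, Set.singleton_subset_iff]; exact Metric.mem_ball_self (by positivity))
  obtain ⟨η0, hη0, hη⟩ := Metric.eventually_nhds_iff.1 hev
  set η := min η0 ε with hηdef
  have hηpos : 0 < η := by positivity
  obtain ⟨σ, hσ, hB⟩ := claimB hg hy ht hηpos
  -- Claim C
  have hC : ∃ h : ℝ, 0 < h ∧ h < σ / 2 ∧ g y < HLu g (x0 + h • nu Dg y) t := by
    obtain ⟨h, hh0, hhm⟩ := exists_between (show (0:ℝ) < min (σ / 2) (min (R / 2) η) by positivity)
    rw [lt_min_iff, lt_min_iff] at hhm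
    refine ⟨h, hh0, hhm.1, ?_⟩
    have hnh : ‖h • nu Dg y‖ = h := by
      rw [norm_smul, norm_nu hy, Real.norm_of_nonneg hh0.le, mul_one]
    obtain ⟨z, hz⟩ := HLu_ex hc (x0 + h • nu Dg y) ht.le
    have hzb : z ∈ Metric.ball y (R / 2) := hη (by
      rw [dist_eq_norm, add_sub_cancel_left, hnh]
      exact hhm.2.2.trans_le (min_le_left _ _)) hz
    have ha1 : g y ≤ g (z - h • nu Dg y) := hU.in _ (by
      rw [sub_sub, add_comm (h • nu Dg y)]; exact hz.1)
    have haR : z - h • nu Dg y ∈ Metric.ball y R := by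
      rw [mem_ball_iff_norm] at hzb ⊢
      have : ‖z - h • nu Dg y - y‖ ≤ ‖z - y‖ + ‖h • nu Dg y‖ := by
        rw [sub_right_comm]; exact norm_sub_le _ _
      linarith
    have hzR : z ∈ Metric.ball y R := Metric.ball_subset_ball (by linarith) hzb
    have := mono_dir hg (convex_ball y R) (w := nu Dg y) (fun p hp => hinnu p hp y hyR) hh0 haR
      (by rwa [sub_add_cancel])
    rw [sub_add_cancel] at this
    rw [← hz.2]
    linarith
  obtain ⟨h, hh0, hhσ, hhu⟩ := hC
  -- choose y'
  have hfreq := mem_closure_iff_frequently.1 hcl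
  have hevy : ∀ᶠ y' in 𝓝 y, dist y' y < σ / 2 ∧ y' ∈ Metric.ball y R ∧
      g y' < HLu g (x0 + h • nu Dg y) t ∧ g y - σ < g y' := by
    filter_upwards [Metric.ball_mem_nhds y (by positivity : 0 < σ / 2), Metric.ball_mem_nhds y hR,
      hc.continuousAt.eventually (gt_mem_nhds hhu),
      hc.continuousAt.eventually (lt_mem_nhds (by linarith : g y - σ < g y))] with y' a b c d
    exact ⟨a, b, c, d⟩
  obtain ⟨y', ⟨hnI, hcy'⟩, hy'σ, hy'R, hy'u, hy'g⟩ := (hfreq.and_eventually hevy).exists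
  have hFc : IsClosed {x | g y' ≤ HLu g x t} := isClosed_le continuous_const hu
  obtain ⟨xs, hxsF, hxsd⟩ := hFc.exists_infDist_eq_dist ⟨_, hy'u.le⟩ y'
  have hclosest : ∀ x, g y' ≤ HLu g x t → ‖xs - y'‖ ≤ ‖x - y'‖ := by
    intro x hx
    have := Metric.infDist_le_dist_of_mem (x := y') (s := {x | g y' ≤ HLu g x t}) hx
    rwa [hxsd, dist_comm, dist_comm y', dist_eq_norm, dist_eq_norm] at this
  have hxsF' : g y' ≤ HLu g xs t := hxsF
  have hxsη : dist xs x0 < η := by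
    apply hB xs y' (by linarith) _ (by linarith)
    refine (hclosest _ hy'u.le).trans ?_
    have e1 : x0 + h • nu Dg y - y' = t • nu Dg y + h • nu Dg y + (y - y') := by
      rw [hx0, charX_eq]; abel
    rw [e1]
    have e2 := norm_add₃_le (a := t • nu Dg y) (b := h • nu Dg y) (c := y - y')
    rw [norm_smul, norm_smul, norm_nu hy, Real.norm_of_nonneg ht.le, Real.norm_of_nonneg hh0.le,
      ← dist_eq_norm, dist_comm y] at e2
    linarith
  set d := ‖xs - y'‖ with hd
  have htd : t < d := by
    by_contra hn
    rw [not_lt] at hn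
    have h1 : ∀ w, ‖w - xs‖ ≤ t → g y' ≤ g w := fun w hw => hxsF'.trans (HLu_le hc hw)
    have h2 := opt hg ht.le (hne y' hy'R) (by rwa [norm_sub_rev]) h1
    apply hnI
    rw [h2] at h1
    exact h1
  have hd0 : 0 < d := ht.trans htd
  obtain ⟨z, hz⟩ := HLu_ex hc xs ht.le
  have hzR2 : z ∈ Metric.ball y (R / 2) := hη (hxsη.trans_le (min_le_left _ _)) hz
  have hzR : z ∈ Metric.ball y R := Metric.ball_subset_ball (by linarith) hzR2
  have hzuniq : HLL g xs t = {z} := by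
    refine Set.eq_singleton_iff_unique_mem.2 ⟨hz, fun z' hz' => ?_⟩
    by_contra hne'
    exact H ⟨xs, z, z', hxsη.trans_le (min_le_right _ _), lt_of_lt_of_le hzR hRε, hz, hz', hne', by
      rw [hz.2]; exact hcy'.trans hxsF'⟩
  have hzmin := ((mem_HLL hc).1 hz).2
  have hxz : xs = z + t • nu Dg z := opt hg ht.le (hne z hzR) hz.1 hzmin
  set e := d⁻¹ • (xs - y') with he
  have hde : d • e = xs - y' := by rw [he, smul_smul, mul_inv_cancel₀ hd0.ne', one_smul]
  have hen : ‖e‖ = 1 := by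
    rw [he, norm_smul, norm_inv, Real.norm_of_nonneg hd0.le, ← hd, inv_mul_cancel₀ hd0.ne']
  have hnun := norm_nu (hne z hzR)
  have hez : e = nu Dg z := by
    by_contra hne'
    have hlt : ⟪e, nu Dg z⟫_ℝ < 1 := (inner_lt_one_iff_real_of_norm_eq_one hen hnun).2 hne'
    set w := nu Dg z - e with hw
    have hew : ⟪e, w⟫_ℝ < 0 := by
      rw [hw, inner_sub_right, real_inner_self_eq_norm_sq, hen]; linarith
    have hDw : 0 < ⟪Dg z, w⟫_ℝ := by
      rw [inner_nu (hne z hzR), hw, inner_sub_right, real_inner_self_eq_norm_sq, hnun,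
        real_inner_comm]
      have := norm_pos_iff.2 (hne z hzR)
      apply mul_pos this
      linarith
    have hcw : Continuous (fun p => ⟪Dg p, w⟫_ℝ) := by fun_prop
    obtain ⟨r, hr, hrw⟩ := Metric.eventually_nhds_iff_ball.1
      (hcw.continuousAt.eventually (lt_mem_nhds hDw))
    have hev2 := usc hc ht.le (Metric.isOpen_ball (x := z) (ε := r / 2)) (x := xs) (by
      rw [hzuniq, Set.singleton_subset_iff]; exact Metric.mem_ball_self (by positivity))
    have htend : Tendsto (fun k : ℝ => xs + k • w) (𝓝[>] 0) (𝓝 xs) := by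
      have : Continuous (fun k : ℝ => xs + k • w) := by fun_prop
      have h2 := this.tendsto 0
      rw [zero_smul, add_zero] at h2
      exact h2.mono_left nhdsWithin_le_nhds
    have e1 : ∀ᶠ k : ℝ in 𝓝[>] 0, k * ‖w‖ < r / 2 := by
      have : Continuous (fun k : ℝ => k * ‖w‖) := by fun_prop
      exact nhdsWithin_le_nhds (this.continuousAt.eventually (gt_mem_nhds (by simpa using hr)))
    have e2 : ∀ᶠ k : ℝ in 𝓝[>] 0, 2 * d * ⟪e, w⟫_ℝ + k * ‖w‖ ^ 2 < 0 := by
      have : Continuous (fun k : ℝ => 2 * d * ⟪e, w⟫_ℝ + k * ‖w‖ ^ 2) := by fun_prop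
      refine nhdsWithin_le_nhds (this.continuousAt.eventually (gt_mem_nhds ?_))
      show 2 * d * ⟪e, w⟫_ℝ + 0 * ‖w‖ ^ 2 < 0
      rw [zero_mul, add_zero]
      exact mul_neg_of_pos_of_neg (by positivity) hew
    obtain ⟨k, ⟨hk1, hk2⟩, hk3, hk0⟩ := ((e1.and e2).and ((htend.eventually hev2).and
      self_mem_nhdsWithin)).exists
    have hk0 : 0 < k := hk0
    have hcloser : ‖xs + k • w - y'‖ < d := by
      rw [← sq_lt_sq₀ (norm_nonneg _) hd0.le, add_sub_right_comm, norm_add_sq_real, ← hd,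
        ← hde, real_inner_smul_left, real_inner_smul_right, norm_smul, Real.norm_of_nonneg hk0.le]
      nlinarith
    have hxu : HLu g (xs + k • w) t < g y' := by
      by_contra hn
      exact absurd (hclosest _ (not_lt.1 hn)) (not_le.2 hcloser)
    obtain ⟨z1, hz1⟩ := HLu_ex hc (xs + k • w) ht.le
    have hz1b := hk3 hz1
    have ha1 : g z ≤ g (z1 - k • w) := hzmin _ (by
      rw [sub_sub, add_comm (k • w)]; exact hz1.1)
    have hab : z1 - k • w ∈ Metric.ball z r := by
      rw [mem_ball_iff_norm] at hz1b ⊢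
      have : ‖z1 - k • w - z‖ ≤ ‖z1 - z‖ + ‖k • w‖ := by
        rw [sub_right_comm]; exact norm_sub_le _ _
      rw [norm_smul, Real.norm_of_nonneg hk0.le] at this
      linarith
    have := mono_dir hg (convex_ball z r) (w := w) hrw hk0 hab
      (by rw [sub_add_cancel]; exact Metric.ball_subset_ball (by linarith) hz1b)
    rw [sub_add_cancel, hz1.2] at this
    have hzz := hz.2
    linarith
  have hzy' : y' + (d - t) • e = z := by
    have h1 : xs = y' + d • e := by rw [hde]; abel
    have h2 : z = xs - t • e := by rw [hez, eq_sub_iff_add_eq]; exact hxz.symm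
    rw [h2, h1, sub_smul]; abel
  have hgz : g y' < g z := by
    have := mono_dir hg (convex_ball y R) (w := e) (fun p hp => by rw [hez]; exact hinnu p hp z hzR)
      (sub_pos.2 htd) hy'R (by rwa [hzy'])
    rwa [hzy'] at this
  rw [hz.2] at hgz
  have hcont : Continuous (fun k : ℝ => HLu g (xs - k • e) t) :=
    hu.comp (by fun_prop : Continuous (fun k : ℝ => xs - k • e))
  have e1 : ∀ᶠ k : ℝ in 𝓝[>] 0, g y' < HLu g (xs - k • e) t :=
    nhdsWithin_le_nhds (hcont.continuousAt.eventually (lt_mem_nhds (by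
      show g y' < HLu g (xs - (0:ℝ) • e) t
      rw [zero_smul, sub_zero]; exact hgz)))
  have e2 : ∀ᶠ k : ℝ in 𝓝[>] 0, k < d := nhdsWithin_le_nhds (gt_mem_nhds hd0)
  obtain ⟨k, ⟨hk1, hk2⟩, hk0⟩ := ((e1.and e2).and self_mem_nhdsWithin).exists
  have hk0 : 0 < k := hk0
  have := hclosest _ hk1.le
  rw [sub_right_comm, ← hde, ← sub_smul, norm_smul, hen, Real.norm_of_nonneg (by linarith)] at this
  linarith

end lemA
end HLaux

namespace HLaux

/-- Good points at level `c`. -/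
def MC {n : ℕ} (g : Euc n → ℝ) (Dg : Euc n → Euc n) (c : ℝ) : Set (Euc n) :=
  {y | Dg y ≠ 0 ∧ c ≤ g y ∧ ∃ z, 0 < ⟪Dg y, z - y⟫_ℝ ∧ g z ≤ c}

/-- The point of the characteristic. -/
def P {n : ℕ} (Dg : Euc n → Euc n) (y : Euc n) (t : ℝ) : Euc n × ℝ := (charX Dg y t, t)

/-- Termination points from `N`. -/
def T0 {n : ℕ} (g : Euc n → ℝ) (Dg : Euc n → Euc n) (N : Set (Euc n)) : Set (Euc n × ℝ) :=
  {p | ∃ y ∈ N, ∃ t ∈ J g Dg y, p = P Dg y t}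

/-- Termination points from `N` with positive time. -/
def Tp {n : ℕ} (g : Euc n → ℝ) (Dg : Euc n → Euc n) (N : Set (Euc n)) : Set (Euc n × ℝ) :=
  {p | ∃ y ∈ N, ∃ t ∈ J g Dg y, 0 < t ∧ p = P Dg y t}

section comp
variable {n : ℕ} {g : Euc n → ℝ} {Dg : Euc n → Euc n}

lemma MC_nhd (hDg : Continuous Dg) {c : ℝ} {y : Euc n} (hy : y ∈ MC g Dg c) :
    ∃ R > 0, ∀ y', dist y' y < R → c ≤ g y' → y' ∈ MC g Dg c := by
  obtain ⟨h0, h1, z, hz, hzc⟩ := hy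
  have hcc : Continuous (fun q : Euc n => ⟪Dg q, z - q⟫_ℝ) := by fun_prop
  obtain ⟨R, hR, h⟩ := Metric.eventually_nhds_iff.1
    ((hcc.continuousAt.eventually (lt_mem_nhds hz)).and
      (hDg.continuousAt.eventually_ne h0))
  exact ⟨R, hR, fun y' hy' hc => ⟨(h hy').2, hc, z, (h hy').1, hzc⟩⟩

lemma MC_comp (hg : ∀ y, HasGradientAt g (Dg y) y) (hDg : Continuous Dg) {c : ℝ} {y : Euc n}
    (hy : y ∈ MC g Dg c) : ∃ r > 0, ∀ y', dist y' y < r → c ≤ g y' →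
      y' ∈ connectedComponentIn (MC g Dg c) y := by
  obtain ⟨R1, hR1, hM⟩ := MC_nhd hDg hy
  obtain ⟨R2, hR2, hI⟩ := ball_inner hDg hy.1
  have hc := gcont hg
  set R := min R1 R2 with hR
  have hR0 : 0 < R := by positivity
  set h := R / 2 with hh
  have hh0 : 0 < h := by positivity
  have hnn := norm_nu hy.1
  have hnh : ∀ s : ℝ, 0 ≤ s → ‖s • nu Dg y‖ = s := fun s hs => by
    rw [norm_smul, hnn, Real.norm_of_nonneg hs, mul_one]
  have hdir : ∀ p ∈ Metric.ball y R, 0 < ⟪Dg p, nu Dg y⟫_ℝ := by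
    intro p hp
    rw [nu, real_inner_smul_right]
    have := hI p (Metric.ball_subset_ball (min_le_right _ _) hp) y (Metric.mem_ball_self hR2)
    have := norm_pos_iff.2 hy.1
    positivity
  have hseg : ∀ y', dist y' y < h → c ≤ g y' → ∀ s : ℝ, 0 ≤ s → s ≤ h →
      y' + s • nu Dg y ∈ MC g Dg c := by
    intro y' hy' hcy s hs hsh
    have hb : y' + s • nu Dg y ∈ Metric.ball y R := by
      rw [mem_ball_iff_norm, add_sub_right_comm]
      rw [dist_eq_norm] at hy'
      have := norm_add_le (y' - y) (s • nu Dg y)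
      rw [hnh s hs] at this
      linarith
    refine hM _ (lt_of_lt_of_le hb (min_le_left _ _)) ?_
    rcases hs.eq_or_lt with h0 | h0
    · rw [← h0, zero_smul, add_zero]; exact hcy
    · exact hcy.trans (mono_dir hg (convex_ball y R) hdir h0
        (Metric.ball_subset_ball (by linarith) (Metric.mem_ball.2 hy')) hb).le
  have hseg' : ∀ y', dist y' y < h → c ≤ g y' → segment ℝ y' (y' + h • nu Dg y) ⊆ MC g Dg c := by
    intro y' hy' hcy p hp
    rw [segment_eq_image'] at hp
    obtain ⟨θ, hθ, rfl⟩ := hp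
    simp only [add_sub_cancel_left, smul_smul]
    exact hseg y' hy' hcy _ (mul_nonneg hθ.1 hh0.le) (mul_le_of_le_one_left hh0.le hθ.2)
  have htop : c < g (y + h • nu Dg y) := by
    refine lt_of_le_of_lt hy.2.1 (mono_dir hg (convex_ball y R) hdir hh0 (Metric.mem_ball_self hR0) ?_)
    rw [mem_ball_iff_norm, add_sub_cancel_left, hnh h hh0.le]; linarith
  obtain ⟨r, hr, hrg⟩ := Metric.eventually_nhds_iff_ball.1
    (hc.continuousAt.eventually (lt_mem_nhds htop))
  refine ⟨min r h, by positivity, fun y' hy' hcy => ?_⟩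
  rw [lt_min_iff] at hy'
  have hyh : dist y y < h := by rwa [dist_self]
  have hs3 : segment ℝ (y' + h • nu Dg y) (y + h • nu Dg y) ⊆ MC g Dg c := by
    have hcv : segment ℝ (y' + h • nu Dg y) (y + h • nu Dg y) ⊆
        Metric.ball (y + h • nu Dg y) (min r h) := by
      apply (convex_ball _ _).segment_subset
      · rw [Metric.mem_ball, dist_add_right]; exact lt_min hy'.1 hy'.2
      · exact Metric.mem_ball_self (by positivity)
    intro p hp
    have hp' := hcv hp
    refine hM p ?_ (hrg p (Metric.ball_subset_ball (min_le_left _ _) hp')).le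
    have h1 : dist p (y + h • nu Dg y) < h :=
      Metric.ball_subset_ball (min_le_right _ _) hp'
    have h2 : dist (y + h • nu Dg y) y = h := by
      rw [dist_eq_norm, add_sub_cancel_left, hnh h hh0.le]
    have h3 := dist_triangle p (y + h • nu Dg y) y
    have h4 : R ≤ R1 := min_le_left _ _
    linarith
  have k1 : IsPreconnected (segment ℝ y (y + h • nu Dg y) ∪
      segment ℝ (y' + h • nu Dg y) (y + h • nu Dg y)) :=
    IsPreconnected.union _ (right_mem_segment ℝ _ _) (right_mem_segment ℝ _ _)
      (convex_segment _ _).isPreconnected (convex_segment _ _).isPreconnected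
  have k2 := IsPreconnected.union (y' + h • nu Dg y) (Or.inr (left_mem_segment ℝ _ _))
    (right_mem_segment ℝ _ _) k1 (convex_segment y' (y' + h • nu Dg y)).isPreconnected
  refine k2.subset_connectedComponentIn (Or.inl (Or.inl (left_mem_segment ℝ _ _))) ?_
    (Or.inr (left_mem_segment ℝ _ _))
  exact Set.union_subset (Set.union_subset (hseg' y hyh hy.2.1) hs3) (hseg' y' hy'.2 hcy)

/-- Local property. -/
def Loc {n : ℕ} (g : Euc n → ℝ) (c : ℝ) (N : Set (Euc n)) : Prop :=
  ∀ y ∈ N, ∃ R > 0, ∀ y', dist y' y < R → c ≤ g y' → y' ∈ N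

lemma Loc_comp (hg : ∀ y, HasGradientAt g (Dg y) y) (hDg : Continuous Dg) (c : ℝ) (x : Euc n) :
    Loc g c (connectedComponentIn (MC g Dg c) x) := by
  intro y hy
  obtain ⟨r, hr, h⟩ := MC_comp hg hDg (connectedComponentIn_subset _ _ hy)
  rw [← connectedComponentIn_eq hy] at h
  exact ⟨r, hr, h⟩

lemma J_bdd (hDg : Continuous Dg) {c : ℝ} {y : Euc n}
    (hy : y ∈ MC g Dg c) : ∃ T > 0, ∀ᶠ y' in 𝓝 y, c ≤ g y' → ¬ Uq g Dg y' T := by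
  obtain ⟨h0, h1, z, hz, hzc⟩ := hy
  obtain ⟨T, hT, hzT⟩ := ball_of_inner_pos h0 hz
  have hzy : z ≠ y := by rintro rfl; simp at hz
  refine ⟨T, hT, ?_⟩
  have hcc : ContinuousAt (fun y' => ‖z - charX Dg y' T‖) y := by
    have h2 : ContinuousAt (fun y' => charX Dg y' T) y :=
      ContinuousAt.comp (f := fun y' : Euc n => (y', T)) (g := fun q : Euc n × ℝ => charX Dg q.1 q.2)
        (charX_cont hDg h0 T) (by fun_prop)
    exact (continuousAt_const.sub h2).norm
  filter_upwards [hcc.eventually (gt_mem_nhds hzT), isOpen_ne.mem_nhds hzy.symm] with y' a b hc hU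
  have := hU z a.le (fun h => b h.symm)
  linarith

lemma P_cont (hDg : Continuous Dg) {y : Euc n} (h : Dg y ≠ 0) (t : ℝ) :
    ContinuousAt (fun q : Euc n × ℝ => P Dg q.1 q.2) (y, t) :=
  (charX_cont hDg h t).prodMk continuousAt_snd

lemma P_cont_t (y : Euc n) : Continuous (P Dg y) := by
  have : Continuous (fun t : ℝ => y + t • nu Dg y) := by fun_prop
  exact this.prodMk continuous_id

lemma J_nonempty (hg : ∀ y, HasGradientAt g (Dg y) y) (hDg : Continuous Dg) {y : Euc n}
    (hy : Dg y ≠ 0) {T : ℝ} (hT : 0 ≤ T) (hU : ¬ Uq g Dg y T) : ∃ t ∈ J g Dg y, t ≤ T := by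
  set S := {s : ℝ | 0 ≤ s ∧ (s = 0 ∨ Uq g Dg y s)} with hS
  have h0 : (0:ℝ) ∈ S := ⟨le_rfl, Or.inl rfl⟩
  have hle : ∀ s ∈ S, s ≤ T := by
    rintro s ⟨hs, rfl | hs'⟩
    · exact hT
    · by_contra hn
      exact hU (hs'.mono hT (not_le.1 hn).le hy)
  have hbdd : BddAbove S := ⟨T, hle⟩
  have hs0 : 0 ≤ sSup S := le_csSup hbdd h0
  refine ⟨sSup S, ⟨hs0, ?_, ?_⟩, csSup_le ⟨0, h0⟩ hle⟩
  · have hcl : sSup S ∈ closure S := csSup_mem_closure ⟨0, h0⟩ hbdd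
    refine In_closed hg hDg (F := 𝓝 (sSup S)) (f := fun _ => y) (τ := id) hy hs0 tendsto_const_nhds
      tendsto_id ?_
    refine (mem_closure_iff_frequently.1 hcl).mono ?_
    rintro s ⟨hs, rfl | hs'⟩
    · exact ⟨le_rfl, In_zero y⟩
    · exact ⟨hs, hs'.in⟩
  · intro s hs hu
    exact absurd (le_csSup hbdd (⟨hs0.trans hs.le, Or.inr hu⟩ : s ∈ S)) (not_le.2 hs)

lemma J_mid {y : Euc n} (hy : Dg y ≠ 0) {a b s : ℝ} (ha : a ∈ J g Dg y) (has : a ≤ s) (hsb : s ≤ b)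
    (hb : In g Dg y b) : s ∈ J g Dg y :=
  ⟨ha.1.trans has, hb.mono (ha.1.trans has) hsb hy, fun r hr => ha.2.2 r (lt_of_le_of_lt has hr)⟩

lemma J_pre {y : Euc n} (hy : Dg y ≠ 0) : IsPreconnected (J g Dg y) := by
  have : (J g Dg y).OrdConnected := ⟨fun a ha b hb s hs => J_mid hy ha hs.1 hs.2 hb.2.1⟩
  exact this.isPreconnected

lemma J_of_notUq {y : Euc n} (hy : Dg y ≠ 0) {t : ℝ} (ht : 0 ≤ t) (h1 : In g Dg y t)
    (h2 : ¬ Uq g Dg y t) : t ∈ J g Dg y :=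
  ⟨ht, h1, fun _ hs hu => h2 (hu.mono ht (le_of_lt hs) hy)⟩

end comp
end HLaux

namespace HLaux
section half
variable {n : ℕ} {g : Euc n → ℝ} {Dg : Euc n → Euc n}

lemma sep_pre {α : Type*} [TopologicalSpace α] {Q A B : Set α} (hQ : IsPreconnected Q)
    (hcov : Q ⊆ closure A ∪ closure B) (hd : Disjoint (closure A) (closure B))
    {a b : α} (haQ : a ∈ Q) (ha : a ∈ closure A) (hbQ : b ∈ Q) (hb : b ∈ closure B) : False := by
  obtain ⟨q, -, hq⟩ := isPreconnected_closed_iff.1 hQ _ _ isClosed_closure isClosed_closure hcov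
    ⟨a, haQ, ha⟩ ⟨b, hbQ, hb⟩
  exact Set.disjoint_left.1 hd hq.1 hq.2

lemma fiber {N : Set (Euc n)} {A B : Set (Euc n × ℝ)} (hAB : A ∪ B = T0 g Dg N)
    (hd : Disjoint (closure A) (closure B)) {y : Euc n} (hy : y ∈ N) (hD : Dg y ≠ 0) {a b : ℝ}
    (ha : a ∈ J g Dg y) (haA : P Dg y a ∈ closure A) (hb : b ∈ J g Dg y)
    (hbB : P Dg y b ∈ closure B) : False := by
  refine sep_pre ((J_pre hD).image (P Dg y) (P_cont_t y).continuousOn) ?_ hd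
    ⟨a, ha, rfl⟩ haA ⟨b, hb, rfl⟩ hbB
  rintro _ ⟨t, ht, rfl⟩
  have : P Dg y t ∈ A ∪ B := by rw [hAB]; exact ⟨y, hy, t, ht, rfl⟩
  exact this.imp (fun h => subset_closure h) (fun h => subset_closure h)

lemma half (hg : ∀ y, HasGradientAt g (Dg y) y) (hDg : Continuous Dg) {c : ℝ} {N : Set (Euc n)}
    (hN : N ⊆ MC g Dg c) (hL : Loc g c N) {A B : Set (Euc n × ℝ)} (hAB : A ∪ B = T0 g Dg N)
    (hd : Disjoint (closure A) (closure B)) {y : Euc n} (hy : y ∈ N)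
    (hyA : y ∈ closure {y' | y' ∈ N ∧ ∃ t ∈ J g Dg y', P Dg y' t ∈ A}) {b : ℝ}
    (hb : b ∈ J g Dg y) (hbB : P Dg y b ∈ B) : False := by
  have hD := (hN hy).1
  obtain ⟨U, hUA, hUy⟩ := mem_closure_iff_ultrafilter.1 hyA
  obtain ⟨T, hT, hTe⟩ := J_bdd hDg (hN hy)
  have hτ : ∀ y' : Euc n, ∃ τ, Dg y' ≠ 0 → ¬ Uq g Dg y' T → τ ∈ J g Dg y' ∧ τ ≤ T := by
    intro y'
    by_cases h : Dg y' ≠ 0 ∧ ¬ Uq g Dg y' T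
    · obtain ⟨τ, h1, h2⟩ := J_nonempty hg hDg h.1 hT.le h.2
      exact ⟨τ, fun _ _ => ⟨h1, h2⟩⟩
    · exact ⟨0, fun h1 h2 => absurd ⟨h1, h2⟩ h⟩
  choose τ hτ using hτ
  have hevN : ∀ᶠ y' in (U : Filter (Euc n)), y' ∈ N := by
    filter_upwards [hUA] with y' h using h.1
  have hevJ : ∀ᶠ y' in (U : Filter (Euc n)), τ y' ∈ J g Dg y' ∧ τ y' ≤ T := by
    filter_upwards [hevN, hUy hTe] with y' h1 h2
    exact hτ y' (hN h1).1 (h2 (hN h1).2.1)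
  have hinA : ∀ᶠ y' in (U : Filter (Euc n)), ∀ t ∈ J g Dg y', P Dg y' t ∈ A := by
    filter_upwards [hUA] with y' h t ht
    obtain ⟨h1, a, ha, haA⟩ := h
    have : P Dg y' t ∈ A ∪ B := by rw [hAB]; exact ⟨y', h1, t, ht, rfl⟩
    refine this.resolve_right (fun hB => ?_)
    exact fiber hAB hd h1 (hN h1).1 ha (subset_closure haA) ht (subset_closure hB)
  obtain ⟨s, hs, hUs⟩ := (isCompact_Icc (a := (0:ℝ)) (b := T)).ultrafilter_le_nhds (U.map τ) (by
    rw [Filter.le_principal_iff]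
    show τ ⁻¹' (Set.Icc 0 T) ∈ (U : Filter (Euc n))
    filter_upwards [hevJ] with y' h using ⟨h.1.1, h.2⟩)
  have hts : Tendsto τ U (𝓝 s) := hUs
  have hid : Tendsto (fun y' : Euc n => y') U (𝓝 y) := hUy
  have hPs : P Dg y s ∈ closure A := by
    refine mem_closure_of_tendsto ((P_cont hDg hD s).tendsto.comp (hid.prodMk_nhds hts)) ?_
    filter_upwards [hinA, hevJ] with y' h1 h2 using h1 _ h2.1
  have hIs : In g Dg y s := In_closed hg hDg hD hs.1 hid hts
    (Eventually.frequently (hevJ.mono fun y' h => ⟨h.1.1, h.1.2.1⟩))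
  rcases le_or_gt b s with hbs | hsb
  · exact fiber hAB hd hy hD (J_mid hD hb hbs le_rfl hIs) hPs hb (subset_closure hbB)
  · refine sep_pre ((isPreconnected_Icc (a := s) (b := b)).image (P Dg y) (P_cont_t y).continuousOn) ?_
      hd ⟨s, ⟨le_rfl, hsb.le⟩, rfl⟩ hPs ⟨b, ⟨hsb.le, le_rfl⟩, rfl⟩ (subset_closure hbB)
    rintro _ ⟨t, ⟨hst, htb⟩, rfl⟩
    rcases hst.eq_or_lt with rfl | hst
    · exact Or.inl hPs
    have ht0 : 0 < t := hs.1.trans_lt hst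
    have hIt : In g Dg y t := hb.2.1.mono ht0.le htb hD
    rw [← closure_union, hAB]
    by_cases hUt : Uq g Dg y t
    swap
    · exact subset_closure ⟨y, hy, t, J_of_notUq hD ht0.le hIt hUt, rfl⟩
    by_cases hF : ∀ᶠ y' in (U : Filter (Euc n)), In g Dg y' t
    · refine mem_closure_of_tendsto (f := fun y' => P Dg y' t)
        ((P_cont hDg hD t).tendsto.comp (hid.prodMk_nhds tendsto_const_nhds)) ?_
      filter_upwards [hF, hevJ, hevN, hts.eventually (gt_mem_nhds hst)] with y' h1 h2 h3 h4
      exact ⟨y', h3, t, J_mid (hN h3).1 h2.1 (le_of_lt h4) le_rfl h1, rfl⟩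
    · rw [← Ultrafilter.eventually_not] at hF
      have hcl : y ∈ closure {y' | ¬ In g Dg y' t ∧ c ≤ g y'} := by
        refine mem_closure_of_tendsto hid ?_
        filter_upwards [hF, hevN] with y' h1 h2 using ⟨h1, (hN h2).2.1⟩
      obtain ⟨R, hR, hRN⟩ := hL y hy
      rw [Metric.mem_closure_iff]
      intro ε hε
      obtain ⟨x, z, z', h1, h2, h3, h4, h5, h6⟩ := lemA hg hDg hD ht0 hUt hcl
        (lt_min hε hR)
      rw [lt_min_iff] at h1 h2
      have hzN := hRN z h2.2 h6
      obtain ⟨hJ, hx⟩ := J_of_two hg ht0.le (hN hzN).1 h3 h4 h5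
      refine ⟨P Dg z t, ⟨z, hzN, t, hJ, rfl⟩, ?_⟩
      rw [dist_comm, P, P, Prod.dist_eq, ← hx]
      simpa using h1.1

lemma WC_T0 (hg : ∀ y, HasGradientAt g (Dg y) y) (hDg : Continuous Dg) {c : ℝ} {N : Set (Euc n)}
    (hN : N ⊆ MC g Dg c) (hL : Loc g c N) (hpre : IsPreconnected N) : WC (T0 g Dg N) := by
  intro A B hA hB hAB ε hε
  by_contra H
  push Not at H
  have hd : Disjoint (closure A) (closure B) := by
    rw [Set.disjoint_left]
    intro p hpA hpB
    obtain ⟨a, ha, ha'⟩ := Metric.mem_closure_iff.1 hpA (ε / 2) (by positivity)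
    obtain ⟨b, hb, hb'⟩ := Metric.mem_closure_iff.1 hpB (ε / 2) (by positivity)
    have := H a ha b hb
    have := dist_triangle_left a b p
    linarith
  set NA := {y' | y' ∈ N ∧ ∃ t ∈ J g Dg y', P Dg y' t ∈ A} with hNA
  set NB := {y' | y' ∈ N ∧ ∃ t ∈ J g Dg y', P Dg y' t ∈ B} with hNB
  have hJ : ∀ y ∈ N, y ∈ NA ∨ y ∈ NB := by
    intro y hy
    obtain ⟨T, hT, hTe⟩ := J_bdd hDg (hN hy)
    obtain ⟨t, ht, -⟩ := J_nonempty hg hDg (hN hy).1 hT.le (hTe.self_of_nhds (hN hy).2.1)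
    have : P Dg y t ∈ A ∪ B := by rw [hAB]; exact ⟨y, hy, t, ht, rfl⟩
    exact this.imp (fun h => ⟨hy, t, ht, h⟩) (fun h => ⟨hy, t, ht, h⟩)
  have hne : ∀ C : Set (Euc n × ℝ), C.Nonempty → C ⊆ T0 g Dg N →
      (N ∩ closure {y' | y' ∈ N ∧ ∃ t ∈ J g Dg y', P Dg y' t ∈ C}).Nonempty := by
    rintro C ⟨p, hp⟩ hC
    obtain ⟨y, hy, t, ht, rfl⟩ := hC hp
    exact ⟨y, hy, subset_closure ⟨hy, t, ht, hp⟩⟩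
  obtain ⟨y, hy, hy1, hy2⟩ := isPreconnected_closed_iff.1 hpre (closure NA) (closure NB)
    isClosed_closure isClosed_closure
    (fun y hy => (hJ y hy).imp (fun h => subset_closure h) (fun h => subset_closure h))
    (hne A hA (hAB ▸ Set.subset_union_left)) (hne B hB (hAB ▸ Set.subset_union_right))
  rcases hJ y hy with ⟨-, t, ht, h⟩ | ⟨-, t, ht, h⟩
  · exact half hg hDg hN hL (by rwa [Set.union_comm]) hd.symm hy hy2 ht h
  · exact half hg hDg hN hL hAB hd hy hy1 ht h

lemma T0_sub (hg : ∀ y, HasGradientAt g (Dg y) y) (hDg : Continuous Dg) {c : ℝ} {N : Set (Euc n)}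
    (hN : N ⊆ MC g Dg c) (hL : Loc g c N) : T0 g Dg N ⊆ closure (Tp g Dg N) := by
  rintro _ ⟨y, hy, t, ht, rfl⟩
  rcases ht.1.eq_or_lt with h0 | h0
  swap
  · exact subset_closure ⟨y, hy, t, ht, h0, rfl⟩
  subst h0
  have hD := (hN hy).1
  by_cases hex : ∃ s0 > 0, In g Dg y s0
  · obtain ⟨s0, hs0, hI⟩ := hex
    refine mem_closure_of_tendsto (b := 𝓝[>] (0:ℝ)) (f := P Dg y)
      (((P_cont_t y).tendsto 0).mono_left nhdsWithin_le_nhds) ?_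
    filter_upwards [self_mem_nhdsWithin, nhdsWithin_le_nhds (gt_mem_nhds hs0)] with s h1 h2
    have h1 : 0 < s := h1
    exact ⟨y, hy, s, J_mid hD ht h1.le (le_of_lt h2) hI, h1, rfl⟩
  push Not at hex
  rw [Metric.mem_closure_iff]
  intro ε hε
  obtain ⟨δ, hδ, hδP⟩ := Metric.continuousAt_iff.1 (P_cont hDg hD 0) ε hε
  have hδ2 : 0 < δ / 2 := by positivity
  have hnI : ∀ᶠ y' in 𝓝 y, ¬ In g Dg y' (δ / 2) := by
    by_contra hn
    rw [Filter.not_eventually] at hn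
    refine hex _ hδ2 (In_closed hg hDg hD hδ2.le (f := fun y' => y') (τ := fun _ => δ / 2) tendsto_id
      tendsto_const_nhds (hn.mono fun y' h => ⟨hδ2.le, not_not.1 h⟩))
  have hDpos : 0 < ‖Dg y‖ := norm_pos_iff.2 hD
  have hDn : ∀ᶠ y' in 𝓝 y, dist (Dg y') (Dg y) < ‖Dg y‖ / 4 :=
    hDg.continuousAt (Metric.ball_mem_nhds _ (by positivity))
  obtain ⟨T, hT, hTe⟩ := J_bdd hDg (hN hy)
  obtain ⟨R1, hR1, hRN⟩ := hL y hy
  obtain ⟨R2, hR2, hR⟩ := Metric.eventually_nhds_iff_ball.1 (hnI.and (hDn.and hTe))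
  obtain ⟨s, hs, hsm⟩ := exists_between (show (0:ℝ) < min (R1 / 4) (min (R2 / 4) (δ / 4)) by positivity)
  rw [lt_min_iff, lt_min_iff] at hsm
  obtain ⟨hs1, hs2, hs3⟩ := hsm
  have hc := gcont hg
  obtain ⟨z, hz⟩ := HLu_ex hc (y + (2 * s) • nu Dg y) hs.le
  have hnn := norm_nu hD
  have hzs := hz.1
  have hzd : dist z y ≤ 3 * s := by
    rw [dist_eq_norm]
    have e : z - y = (z - (y + (2 * s) • nu Dg y)) + (2 * s) • nu Dg y := by abel
    rw [e]
    refine (norm_add_le _ _).trans ?_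
    rw [norm_smul, hnn, Real.norm_of_nonneg (by positivity)]
    linarith
  have hzin : s ≤ ⟪nu Dg y, z - y⟫_ℝ := by
    have e : z - y = (z - (y + (2 * s) • nu Dg y)) + (2 * s) • nu Dg y := by abel
    rw [e, inner_add_right, real_inner_smul_right, real_inner_self_eq_norm_sq, hnn]
    have := abs_le.1 (abs_real_inner_le_norm (nu Dg y) (z - (y + (2 * s) • nu Dg y)))
    rw [hnn, one_mul] at this
    linarith [this.1]
  have hgz : g y < g z := by
    have := mono_dir hg (convex_ball y R2) (w := z - y) (a := y) (s := 1) (fun p hp => by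
      have h1 := (hR p hp).2.1
      have e : Dg p = Dg y + (Dg p - Dg y) := by abel
      rw [e, inner_add_left, inner_nu hD]
      have h2 := (abs_le.1 (abs_real_inner_le_norm (Dg p - Dg y) (z - y))).1
      rw [dist_eq_norm] at h1 hzd
      have h3 : ‖Dg p - Dg y‖ * ‖z - y‖ ≤ ‖Dg y‖ / 4 * (3 * s) := by gcongr
      have h4 : ‖Dg y‖ * s ≤ ‖Dg y‖ * ⟪nu Dg y, z - y⟫_ℝ := by gcongr
      have h5 : 0 < ‖Dg y‖ * s := by positivity
      linarith) one_pos (Metric.mem_ball_self hR2) (by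
        rw [one_smul, add_sub_cancel, Metric.mem_ball]; linarith)
    rwa [one_smul, add_sub_cancel] at this
  have hzN : z ∈ N := hRN z (by linarith) ((hN hy).2.1.trans hgz.le)
  have hzb : z ∈ Metric.ball y R2 := by rw [Metric.mem_ball]; linarith
  have hDz := (hN hzN).1
  have hzm := ((mem_HLL hc).1 hz).2
  have hIz : In g Dg z s := by
    have := opt hg hs.le hDz hz.1 hzm
    rw [this] at hzm
    exact hzm
  obtain ⟨j, hj, -⟩ := J_nonempty hg hDg hDz hT.le ((hR z hzb).2.2 (hN hzN).2.1)
  have hjδ : j < δ / 2 := by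
    by_contra hn
    exact (hR z hzb).1 (hj.2.1.mono hδ2.le (not_lt.1 hn) hDz)
  have hmJ : max j s ∈ J g Dg z := J_mid hDz hj (le_max_left _ _) le_rfl (by
    rcases max_choice j s with h | h <;> rw [h]
    · exact hj.2.1
    · exact hIz)
  have hm0 : 0 < max j s := lt_max_of_lt_right hs
  refine ⟨P Dg z (max j s), ⟨z, hzN, _, hmJ, hm0, rfl⟩, ?_⟩
  rw [dist_comm]
  refine hδP (x := (z, max j s)) ?_
  rw [Prod.dist_eq]
  refine max_lt (by simp only; linarith) ?_
  simp only [Real.dist_eq, sub_zero, abs_of_pos hm0]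
  exact max_lt (by linarith) (by linarith)

lemma WC_Tp (hg : ∀ y, HasGradientAt g (Dg y) y) (hDg : Continuous Dg) (c : ℝ) (x : Euc n) :
    WC (Tp g Dg (connectedComponentIn (MC g Dg c) x)) := by
  have h1 := connectedComponentIn_subset (MC g Dg c) x
  have h2 := Loc_comp hg hDg c x
  refine (WC_T0 hg hDg h1 h2 isPreconnected_connectedComponentIn).dense ?_ (T0_sub hg hDg h1 h2)
  rintro _ ⟨y, hy, t, ht, -, rfl⟩
  exact ⟨y, hy, t, ht, rfl⟩

lemma cover (hg : ∀ y, HasGradientAt g (Dg y) y) {y : Euc n} (hy : Dg y ≠ 0) {t : ℝ} (ht : 0 ≤ t)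
    (hJ : t ∈ J g Dg y) :
    ∃ c ∈ Set.range ((↑) : ℚ → ℝ) ∪ {c | ∃ z, IsLocalMin g z ∧ g z = c}, y ∈ MC g Dg c := by
  have h1 := hJ.2.2 (t + 1) (by linarith)
  rw [Uq] at h1
  push Not at h1
  obtain ⟨z, hz, hzy, hgz⟩ := h1
  have hz0 := inner_pos_of_ball (by linarith) hy hzy hz
  by_cases hex : ∃ w, 0 < ⟪Dg y, w - y⟫_ℝ ∧ g w < g y
  · obtain ⟨w, hw, hwg⟩ := hex
    obtain ⟨q, hq1, hq2⟩ := exists_rat_btwn hwg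
    exact ⟨q, Or.inl ⟨q, rfl⟩, hy, hq2.le, w, hw, hq1.le⟩
  · push Not at hex
    have he : g z = g y := le_antisymm hgz (hex z hz0)
    refine ⟨g y, Or.inr ⟨z, ?_, he⟩, hy, le_rfl, z, hz0, he.le⟩
    have hcc : Continuous (fun w : Euc n => ⟪Dg y, w - y⟫_ℝ) := by fun_prop
    filter_upwards [hcc.continuousAt.eventually (lt_mem_nhds hz0)] with w hw
    rw [he]
    exact hex w hw

end half
end HLaux

theorem SigmaUnionT1_countable_components {n : ℕ} (hn : 0 < n) (g : Euc n → ℝ) (Dg : Euc n → Euc n)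
    (hg : ∀ y, HasGradientAt g (Dg y) y) (hDg : Continuous Dg) :
    ∃ 𝒮 : Set (Set (Euc n × ℝ)), 𝒮.Countable ∧ (∀ C ∈ 𝒮, C.Nonempty) ∧
      𝒮.PairwiseDisjoint id ∧ (∀ C ∈ 𝒮, IsConnected C ∨ AlmostConnected C) ∧
      ⋃₀ 𝒮 = SigmaSet g ∪ T1 g Dg := by
  have hcov : ∀ c : ℝ, ∃ D : Set (Euc n), D ⊆ HLaux.MC g Dg c ∧ D.Countable ∧
      HLaux.MC g Dg c ⊆ ⋃ x ∈ D, connectedComponentIn (HLaux.MC g Dg c) x := by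
    intro c
    refine TopologicalSpace.countable_cover_nhdsWithin ?_
    intro y hy
    obtain ⟨r, hr, h⟩ := HLaux.MC_comp hg hDg hy
    rw [Metric.mem_nhdsWithin_iff]
    exact ⟨r, hr, fun y' hy' => h y' hy'.1 hy'.2.2.1⟩
  choose D hD1 hD2 hD3 using hcov
  set Cs : Set ℝ := Set.range ((↑) : ℚ → ℝ) ∪ {c | ∃ z, IsLocalMin g z ∧ g z = c} with hCs
  have hCc : Cs.Countable := (Set.countable_range _).union (HLaux.locmin_countable g)
  have hI : (⋃ c ∈ Cs, (fun x : Euc n => (c, x)) '' D c).Countable :=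
    hCc.biUnion fun c _ => (hD2 c).image _
  obtain ⟨𝒮, h1, h2, h3, h4, h5⟩ := HLaux.merge hI
    (fun i => HLaux.Tp g Dg (connectedComponentIn (HLaux.MC g Dg i.1) i.2))
    (fun i _ => HLaux.WC_Tp hg hDg i.1 i.2)
  refine ⟨𝒮, h1, h2, h3, h4, ?_⟩
  rw [h5, HLaux.S_eq hg hDg]
  ext p
  rw [Set.mem_iUnion₂]
  constructor
  · rintro ⟨⟨c, x⟩, -, y, hy, t, ht, h0, rfl⟩
    exact ⟨y, t, (connectedComponentIn_subset _ _ hy).1, h0, ht, rfl⟩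
  · rintro ⟨y, t, hy, h0, ht, rfl⟩
    obtain ⟨c, hc, hyc⟩ := HLaux.cover hg hy h0.le ht
    obtain ⟨x, hx, hyx⟩ := Set.mem_iUnion₂.1 (hD3 c hyc)
    exact ⟨(c, x), Set.mem_iUnion₂.2 ⟨c, hc, x, hx, rfl⟩, y, hyx, t, ht, h0, rfl⟩
end
end
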